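/- arXiv:2209.00317 — 5 statements merged into one kernel-verified Lean document; each statement's English description precedes it below -/
import Mathlib

section
/- Let G be a finite group whose power graph is chordal. Then every induced path in the power graph of G has at most 19 vertices; that is, for every natural number L, if there exists a graph embedding of the path graph on L vertices into the power graph of G, then L ≤ 19. -/
/-- The power graph of a group: distinct `x` and `y` are adjacent iff one is a power
of the other. -/
def powerGraph (G : Type*) [Group G] : SimpleGraph G :=
  SimpleGraph.fromRel (fun x y => x ∈ Subgroup.zpowers y)

/-- A graph is chordal if it has no induced cycle on at least 4 vertices. -/
def IsChordal {V : Type*} (Γ : SimpleGraph V) : Prop :=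
  ∀ n : ℕ, 4 ≤ n → IsEmpty (SimpleGraph.cycleGraph n ↪g Γ)


open SimpleGraph in
theorem geod {V : Type*} {Γ : SimpleGraph V} {u v : V} (h : Γ.Reachable u v) :
    ∃ f : ℕ → V, f 0 = u ∧ f (Γ.dist u v) = v ∧ (∀ i < Γ.dist u v, Γ.Adj (f i) (f (i+1))) ∧
      ∀ i ≤ Γ.dist u v, Γ.dist u (f i) = i := by
  obtain ⟨p, hp⟩ := h.exists_walk_length_eq_dist
  refine ⟨p.getVert, by simp, by simp [← hp], fun i hi => p.adj_getVert_succ (hp ▸ hi), ?_⟩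
  intro i hi
  have h1 : Γ.dist u (p.getVert i) ≤ i := by
    refine (dist_le (p.take i)).trans ?_
    simp
  have h2 := Reachable.dist_triangle_left (p.take i).reachable v
  have h3 := dist_le (p.drop i)
  simp at h3
  omega

open SimpleGraph in
theorem uniq_nbr {V : Type*} {Γ : SimpleGraph V} (hΓ : Γ.IsAcyclic) {x u v w : V}
    (hu : Γ.Adj v u) (hw : Γ.Adj v w) (hr : Γ.Reachable x v)
    (h1 : Γ.dist x u + 1 = Γ.dist x v) (h2 : Γ.dist x w + 1 = Γ.dist x v) : u = w := by
  obtain ⟨p, hp⟩ := (hr.trans hu.reachable).exists_walk_length_eq_dist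
  obtain ⟨q, hq⟩ := (hr.trans hw.reachable).exists_walk_length_eq_dist
  have hp' : (p.concat hu.symm).IsPath := Walk.isPath_of_length_eq_dist _ (by simp; omega)
  have hq' : (q.concat hw.symm).IsPath := Walk.isPath_of_length_eq_dist _ (by simp; omega)
  have := (hΓ.subsingleton_path _ _).elim ⟨_, hp'⟩ ⟨_, hq'⟩
  have h3 := congrArg (fun r : Γ.Path x v => r.1.penultimate) this
  simpa using h3

open SimpleGraph in
theorem acyclic_of {V : Type*} {Γ : SimpleGraph V} (hc : IsChordal Γ)
    (ht : ∀ a b c, Γ.Adj a b → Γ.Adj b c → Γ.Adj a c → False) : Γ.IsAcyclic := by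
  rw [isAcyclic_iff_forall_adj_isBridge]
  intro u v huv
  rw [isBridge_iff]
  by_contra hcon
  have hr : (Γ.deleteEdges {s(u,v)}).Reachable u v := hcon
  obtain ⟨f, f0, fm, fa, fd⟩ := geod hr
  set K := Γ.deleteEdges {s(u,v)} with hK
  have hadj : ∀ a b, K.Adj a b ↔ Γ.Adj a b ∧ s(a,b) ≠ s(u,v) := by
    intro a b; simp [hK, deleteEdges_adj]
  set m := K.dist u v with hm
  have inj : ∀ i ≤ m, ∀ j ≤ m, f i = f j → i = j := by
    intro i hi j hj h
    rw [← fd i hi, ← fd j hj, h]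
  have close : ∀ i ≤ m, ∀ j ≤ m, K.Adj (f i) (f j) → i + 1 = j ∨ j + 1 = i := by
    intro i hi j hj h
    have h1 := h.diff_dist_adj (u := u)
    rw [fd i hi, fd j hj] at h1
    have : i ≠ j := by rintro rfl; exact h.ne rfl
    omega
  have hm0 : m ≠ 0 := by
    intro h0
    have h1 := fm
    rw [h0, f0] at h1
    exact huv.ne h1
  have hm1 : m ≠ 1 := by
    intro h0
    have h1 := fa 0 (by omega)
    rw [f0, show 0 + 1 = m by omega, fm, hadj] at h1
    exact h1.2 rfl
  have key : ∀ i ≤ m, ∀ j ≤ m, (Γ.Adj (f i) (f j) ↔ i + 1 = j ∨ j + 1 = i ∨ (i = 0 ∧ j = m) ∨ (i = m ∧ j = 0)) := by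
    intro i hi j hj
    constructor
    · intro h
      by_cases he : s(f i, f j) = s(u,v)
      · rw [Sym2.eq_iff] at he
        rcases he with ⟨h1, h2⟩ | ⟨h1, h2⟩
        · have := inj i hi 0 (by omega) (by rw [h1, f0])
          have := inj j hj m (by omega) (by rw [h2, fm])
          omega
        · have := inj j hj 0 (by omega) (by rw [h2, f0])
          have := inj i hi m (by omega) (by rw [h1, fm])
          omega
      · have := close i hi j hj ((hadj _ _).2 ⟨h, he⟩)
        omega
    · rintro (rfl | rfl | ⟨rfl, rfl⟩ | ⟨rfl, rfl⟩)
      · exact ((hadj _ _).1 (fa i (by omega))).1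
      · exact ((hadj _ _).1 (fa j (by omega))).1.symm
      · rw [f0, fm]; exact huv
      · rw [f0, fm]; exact huv.symm
  by_cases hm2 : m = 2
  · exact ht (f 0) (f 1) (f 2) ((key _ (by omega) _ (by omega)).2 (by omega))
      ((key _ (by omega) _ (by omega)).2 (by omega)) ((key _ (by omega) _ (by omega)).2 (by omega))
  · refine (hc (m+1) (by omega)).false ⟨⟨fun i => f i.1, ?_⟩, ?_⟩
    · intro i j h
      exact Fin.ext (inj _ (by omega) _ (by omega) h)
    · intro a b
      change Γ.Adj (f a.1) (f b.1) ↔ _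
      rw [key _ (by omega) _ (by omega), cycleGraph_adj']
      have ha := a.2
      have hb := b.2
      rcases le_or_gt a b with h | h
      · rw [Fin.sub_val_of_le h]
        rcases eq_or_lt_of_le h with h' | h'
        · have e : a.1 = b.1 := congrArg _ h'
          have e2 : (a - b).val = 0 := by rw [h', sub_self]; rfl
          omega
        · rw [Fin.val_sub, Nat.mod_eq_of_lt (by have := Fin.lt_def.1 h'; omega)]
          have := Fin.lt_def.1 h'; omega
      · rw [Fin.sub_val_of_le h.le]
        rw [Fin.val_sub (a := b), Nat.mod_eq_of_lt (by have := Fin.lt_def.1 h; omega)]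
        have := Fin.lt_def.1 h; omega

open SimpleGraph in
/-- strict convexity of the distance sum -/
theorem dsum_convex {V : Type*} [Fintype V] {Γ : SimpleGraph V} (hΓ : Γ.IsAcyclic) {u v w : V}
    (hu : Γ.Adj v u) (hw : Γ.Adj v w) (hne : u ≠ w) :
    2 * ∑ x, Γ.dist x v < (∑ x, Γ.dist x u) + ∑ x, Γ.dist x w := by
  rw [Finset.mul_sum, ← Finset.sum_add_distrib]
  apply Finset.sum_lt_sum
  · intro x _
    by_cases hr : Γ.Reachable x v
    · have h1 := hΓ.dist_ne_of_adj hu hr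
      have h2 := hΓ.dist_ne_of_adj hw hr
      have h3 := hu.diff_dist_adj (u := x)
      have h4 := hw.diff_dist_adj (u := x)
      by_contra hlt
      exact hne (uniq_nbr hΓ hu hw hr (by omega) (by omega))
    · simp [dist_eq_zero_of_not_reachable hr]
  · refine ⟨v, Finset.mem_univ _, ?_⟩
    rw [dist_eq_one_iff_adj.2 hu, dist_eq_one_iff_adj.2 hw]; simp

open SimpleGraph in
theorem dist_iso {V : Type*} {Γ : SimpleGraph V} (φ : Γ ≃g Γ) (u v : V) :
    Γ.dist (φ u) (φ v) = Γ.dist u v := by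
  have key : ∀ (ψ : Γ ≃g Γ) (a b : V), Γ.Reachable a b → Γ.dist (ψ a) (ψ b) ≤ Γ.dist a b := by
    intro ψ a b h
    obtain ⟨p, hp⟩ := h.exists_walk_length_eq_dist
    have := dist_le (p.map ψ.toHom)
    rw [Walk.length_map, hp] at this
    exact this
  by_cases h : Γ.Reachable u v
  · apply le_antisymm (key φ u v h)
    have h2 := key φ.symm (φ u) (φ v) (h.map φ.toHom)
    simpa using h2
  · rw [dist_eq_zero_of_not_reachable h, dist_eq_zero_of_not_reachable]
    intro h'
    have := h'.map φ.symm.toHom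
    apply h
    simpa using this

open SimpleGraph in
/-- A vertex in the component of `a` fixed by every label-preserving automorphism preserving
the component. -/
theorem exists_center {V : Type*} [Fintype V] {Γ : SimpleGraph V} (hΓ : Γ.IsAcyclic) (a : V) :
    ∃ c, Γ.Reachable a c ∧ ∀ φ : Γ ≃g Γ, Γ.Reachable c (φ c) → ¬ Γ.Adj c (φ c) → φ c = c := by
  classical
  obtain ⟨c, hc, hmin⟩ := Finset.exists_min_image (Finset.univ.filter fun c => Γ.Reachable a c)
    (fun c => ∑ x, Γ.dist x c) ⟨a, by simp⟩
  simp only [Finset.mem_filter, Finset.mem_univ, true_and] at hc hmin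
  refine ⟨c, hc, fun φ hr hna => ?_⟩
  by_contra hne
  have hs : ∑ x, Γ.dist x (φ c) = ∑ x, Γ.dist x c := by
    rw [← Equiv.sum_comp φ.toEquiv]
    exact Finset.sum_congr rfl fun x _ => dist_iso φ x c
  obtain ⟨f, f0, fm, fa, fd⟩ := geod hr
  set m := Γ.dist c (φ c) with hm
  have hm0 : m ≠ 0 := fun h => hne ((hr.dist_eq_zero_iff.1 (hm ▸ h)).symm)
  have hm1 : m ≠ 1 := fun h => hna (dist_eq_one_iff_adj.1 (hm ▸ h))
  have reach : ∀ i ≤ m, Γ.Reachable a (f i) := by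
    intro i
    induction i with
    | zero => intro _; rw [f0]; exact hc
    | succ k ih => intro hk; exact (ih (by omega)).trans (fa k (by omega)).reachable
  have mono : ∀ i, i + 2 ≤ m → ∑ x, Γ.dist x (f (i+1)) < ∑ x, Γ.dist x (f (i+2)) := by
    intro i
    induction i with
    | zero =>
      intro h
      have h1 := dsum_convex hΓ (fa 0 (by omega)).symm (fa 1 (by omega)) (by
        intro h
        have := fd 0 (by omega); rw [h, fd 2 (by omega)] at this; omega)
      have h2 := hmin _ (reach 1 (by omega))
      rw [← f0] at h2
      simp only [zero_add, Nat.reduceAdd] at *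
      omega
    | succ k ih =>
      intro h
      have h1 := dsum_convex hΓ (fa (k+1) (by omega)).symm (fa (k+2) (by omega)) (by
        intro h
        have := fd (k+1) (by omega); rw [h, fd (k+2+1) (by omega)] at this; omega)
      have h2 := ih (by omega)
      have e1 : k + 1 + 1 = k + 2 := rfl
      have e2 : k + 2 + 1 = k + 1 + 2 := rfl
      rw [e1, e2] at *
      omega
  have le : ∀ i, i + 1 ≤ m → ∑ x, Γ.dist x c ≤ ∑ x, Γ.dist x (f (i+1)) := by
    intro i hi; exact hmin _ (reach _ hi)
  have h1 := mono (m-2) (by omega)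
  have h2 := le (m-2) (by omega)
  rw [show m - 2 + 2 = m by omega, fm, hs] at h1
  omega

open SimpleGraph in
theorem fix_path {V : Type*} {Γ : SimpleGraph V} (hΓ : Γ.IsAcyclic) {f : ℕ → V} {m : ℕ}
    (fa : ∀ i < m, Γ.Adj (f i) (f (i+1))) (fd : ∀ i ≤ m, Γ.dist (f 0) (f i) = i) (φ : Γ ≃g Γ)
    (h0 : φ (f 0) = f 0) (hm : φ (f m) = f m) : ∀ i ≤ m, φ (f i) = f i := by
  have reach : ∀ i ≤ m, Γ.Reachable (f 0) (f i) := by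
    intro i
    induction i with
    | zero => intro _; exact Reachable.refl _
    | succ k ih => intro hk; exact (ih (by omega)).trans (fa k (by omega)).reachable
  have : ∀ k ≤ m, φ (f (m - k)) = f (m - k) := by
    intro k
    induction k with
    | zero => intro _; exact hm
    | succ k ih =>
      intro hk
      have h1 := ih (by omega)
      obtain ⟨j, hj⟩ : ∃ j, m - k = j + 1 := ⟨m - k - 1, by omega⟩
      rw [show m - (k+1) = j by omega]
      rw [hj] at h1
      have ha := fa j (by omega)
      have ha' : Γ.Adj (f (j+1)) (φ (f j)) := by
        rw [← h1]; exact (φ.map_adj_iff.2 ha).symm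
      have hd : Γ.dist (f 0) (φ (f j)) = j := by
        conv_lhs => rw [← h0]
        rw [dist_iso, fd j (by omega)]
      have := fd j (by omega)
      have := fd (j+1) (by omega)
      exact uniq_nbr hΓ ha' ha.symm (reach _ (by omega)) (by omega) (by omega)
  intro i hi
  have := this (m - i) (by omega)
  rwa [show m - (m - i) = i by omega] at this

open SimpleGraph in
theorem far_vertex {V : Type*} {Γ : SimpleGraph V} (hΓ : Γ.IsAcyclic) {c : V} {P : ℕ → V}
    (hc : Γ.Reachable c (P 0))
    (ha : ∀ i < 9, Γ.Adj (P i) (P (i+1))) (hne : ∀ i < 8, P i ≠ P (i+2)) :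
    ∃ v, Γ.Reachable c v ∧ 5 ≤ Γ.dist c v := by
  have reach : ∀ i ≤ 9, Γ.Reachable c (P i) := by
    intro i
    induction i with
    | zero => intro _; exact hc
    | succ k ih => intro hk; exact (ih (by omega)).trans (ha k (by omega)).reachable
  by_contra! hcon
  have b := fun i hi => hcon (P i) (reach i hi)
  have step : ∀ i < 9, Γ.dist c (P (i+1)) = Γ.dist c (P i) + 1 ∨ Γ.dist c (P (i+1)) + 1 = Γ.dist c (P i) := by
    intro i hi
    have h1 := hΓ.dist_ne_of_adj (ha i hi) (reach i (by omega))
    have h3 := (ha i hi).diff_dist_adj (u := c)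
    omega
  have inc : ∀ i < 8, Γ.dist c (P (i+1)) = Γ.dist c (P i) + 1 →
      Γ.dist c (P (i+2)) = Γ.dist c (P (i+1)) + 1 := by
    intro i hi h
    rcases step (i+1) (by omega) with h1 | h1
    · exact h1
    · exact absurd (uniq_nbr hΓ (ha i (by omega)).symm (ha (i+1) (by omega)) (reach (i+1) (by omega))
        h.symm h1) (hne i hi)
  have b0 := b 0 (by omega)
  have b9 := b 9 (by omega)
  have s0 := step 0 (by omega)
  have s1 := step 1 (by omega)
  have s2 := step 2 (by omega)
  have s3 := step 3 (by omega)
  have s4 := step 4 (by omega)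
  have i0 := inc 0 (by omega)
  have i1 := inc 1 (by omega)
  have i2 := inc 2 (by omega)
  have i3 := inc 3 (by omega)
  have i4 := inc 4 (by omega)
  have i5 := inc 5 (by omega)
  have i6 := inc 6 (by omega)
  have i7 := inc 7 (by omega)
  simp only [zero_add, Nat.reduceAdd] at *
  omega

theorem cyc_mem {C : Type*} [Group C] [Finite C] [IsCyclic C] {a b : C}
    (h : orderOf a ∣ orderOf b) : a ∈ Subgroup.zpowers b := by
  classical
  have := Fintype.ofFinite C
  have h1 := IsCyclic.card_pow_eq_one_le (α := C) (orderOf_pos b)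
  have h2 : (Finset.univ.filter fun x : C => x ∈ Subgroup.zpowers b) ⊆
      Finset.univ.filter fun x : C => x ^ orderOf b = 1 := by
    intro x hx
    simp only [Finset.mem_filter, Finset.mem_univ, true_and] at hx ⊢
    exact orderOf_dvd_iff_pow_eq_one.1 (orderOf_dvd_of_mem_zpowers hx)
  have h3 : (Finset.univ.filter fun x : C => x ∈ Subgroup.zpowers b).card = orderOf b := by
    rw [← Fintype.card_zpowers, Fintype.card_subtype]
  have h4 := Finset.eq_of_subset_of_card_le h2 (by rw [h3]; exact h1)
  have h5 : a ∈ Finset.univ.filter fun x : C => x ^ orderOf b = 1 := by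
    simp only [Finset.mem_filter, Finset.mem_univ, true_and]
    exact orderOf_dvd_iff_pow_eq_one.1 h
  rw [← h4] at h5
  simpa using h5

theorem cyc_mem' {G : Type*} [Group G] [Finite G] {a b g : G} (ha : a ∈ Subgroup.zpowers g)
    (hb : b ∈ Subgroup.zpowers g) (h : orderOf a ∣ orderOf b) : a ∈ Subgroup.zpowers b := by
  have := cyc_mem (C := Subgroup.zpowers g) (a := ⟨a, ha⟩) (b := ⟨b, hb⟩) (by
    simpa [Subgroup.orderOf_mk] using h)
  obtain ⟨k, hk⟩ := Subgroup.mem_zpowers_iff.1 this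
  exact Subgroup.mem_zpowers_iff.2 ⟨k, by simpa using congrArg Subtype.val hk⟩

theorem prime_gen {G : Type*} [Group G] [Finite G] {A : Subgroup G} (hA : (Nat.card A).Prime) :
    ∃ x, Subgroup.zpowers x = A ∧ orderOf x = Nat.card A := by
  have := Fact.mk hA
  have : IsCyclic A := isCyclic_of_prime_card (p := Nat.card A) rfl
  obtain ⟨⟨x, hx⟩, h⟩ := IsCyclic.exists_generator (α := A)
  have : Subgroup.zpowers x = A := by
    apply le_antisymm
    · rwa [Subgroup.zpowers_le]
    · intro y hy
      obtain ⟨k, hk⟩ := Subgroup.mem_zpowers_iff.1 (h ⟨y, hy⟩)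
      exact Subgroup.mem_zpowers_iff.2 ⟨k, by simpa using congrArg Subtype.val hk⟩
  exact ⟨x, this, by rw [← Nat.card_zpowers, this]⟩

theorem prime_gen_of {G : Type*} [Group G] [Finite G] {A : Subgroup G} (hA : (Nat.card A).Prime)
    {x : G} (hx : x ∈ A) (h1 : x ≠ 1) : Subgroup.zpowers x = A := by
  apply Subgroup.eq_of_le_of_card_ge (by rwa [Subgroup.zpowers_le])
  rw [Nat.card_zpowers]
  have : orderOf x ∣ Nat.card A := Subgroup.orderOf_dvd_natCard A hx
  rcases (Nat.dvd_prime hA).1 this with h | h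
  · exact absurd (orderOf_eq_one_iff.1 h) h1
  · omega

/-- uniqueness of prime order subgroups of a cyclic group -/
theorem prime_unique {G : Type*} [Group G] [Finite G] {A B : Subgroup G} {g : G}
    (hA : (Nat.card A).Prime) (hAB : Nat.card A = Nat.card B)
    (h1 : A ≤ Subgroup.zpowers g) (h2 : B ≤ Subgroup.zpowers g) : A = B := by
  obtain ⟨x, hx, ox⟩ := prime_gen hA
  obtain ⟨y, hy, oy⟩ := prime_gen (A := B) (hAB ▸ hA)
  have hx' : x ∈ A := hx ▸ Subgroup.mem_zpowers x
  have hy' : y ∈ B := hy ▸ Subgroup.mem_zpowers y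
  apply le_antisymm
  · rw [← hx, Subgroup.zpowers_le, ← hy]
    exact cyc_mem' (h1 hx') (h2 hy') (by rw [ox, oy, hAB])
  · rw [← hy, Subgroup.zpowers_le, ← hx]
    exact cyc_mem' (h2 hy') (h1 hx') (by rw [ox, oy, hAB])

theorem prime_comm {G : Type*} [Group G] {x y : G} (h : x * y = y * x) :
    ∀ a ∈ Subgroup.zpowers x, ∀ b ∈ Subgroup.zpowers y, a * b = b * a := by
  intro a ha b hb
  obtain ⟨k, rfl⟩ := Subgroup.mem_zpowers_iff.1 ha
  obtain ⟨l, rfl⟩ := Subgroup.mem_zpowers_iff.1 hb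
  exact ((show Commute x y from h).zpow_zpow k l)

abbrev PV (G : Type*) [Group G] := {H : Subgroup G // (Nat.card H).Prime}

/-- prime order subgroups, adjacent when commuting with different orders -/
def pg (G : Type*) [Group G] : SimpleGraph (PV G) where
  Adj H K := Nat.card H.1 ≠ Nat.card K.1 ∧ ∀ x ∈ H.1, ∀ y ∈ K.1, x * y = y * x
  symm := ⟨fun _ _ h => ⟨h.1.symm, fun x hx y hy => (h.2 y hy x hx).symm⟩⟩
  loopless := ⟨fun _ h => h.1 rfl⟩

abbrev KV (G : Type*) [Group G] := {H : Subgroup G // (∃ g, Subgroup.zpowers g = H) ∧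
  (ArithmeticFunction.cardFactors (Nat.card H) = 1 ∨ ArithmeticFunction.cardFactors (Nat.card H) = 2)}

def kg (G : Type*) [Group G] : SimpleGraph (KV G) where
  Adj H K := H.1 < K.1 ∨ K.1 < H.1
  symm := ⟨fun _ _ h => h.symm⟩
  loopless := ⟨fun _ h => by simp at h⟩

theorem omega_lt {G : Type*} [Group G] [Finite G] {H K : Subgroup G} (h : H < K) :
    ArithmeticFunction.cardFactors (Nat.card H) < ArithmeticFunction.cardFactors (Nat.card K) := by
  obtain ⟨m, hm⟩ := Subgroup.card_dvd_of_le h.le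
  have hH : Nat.card H ≠ 0 := Nat.card_pos.ne'
  have hK : Nat.card K ≠ 0 := Nat.card_pos.ne'
  have hm0 : m ≠ 0 := by rintro rfl; exact hK (by simpa using hm)
  have hm1 : m ≠ 1 := by
    rintro rfl
    exact h.ne (Subgroup.eq_of_le_of_card_ge h.le (by omega))
  rw [hm, ArithmeticFunction.cardFactors_mul hH hm0]
  have : ArithmeticFunction.cardFactors m ≠ 0 := by
    rw [Ne, ArithmeticFunction.cardFactors_eq_zero_iff_eq_zero_or_one]
    tauto
  omega

theorem powerGraph_adj {G : Type*} [Group G] {x y : G} : (powerGraph G).Adj x y ↔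
    x ≠ y ∧ (x ∈ Subgroup.zpowers y ∨ y ∈ Subgroup.zpowers x) := by
  simp [powerGraph, SimpleGraph.fromRel_adj]

theorem kg_acyclic {G : Type*} [Group G] [Finite G] (hc : IsChordal (powerGraph G)) :
    (kg G).IsAcyclic := by
  have hg : ∀ H : KV G, ∃ g, Subgroup.zpowers g = H.1 := fun H => H.2.1
  choose g hg using hg
  have inj : Function.Injective g := by
    intro H K h
    apply Subtype.ext
    rw [← hg H, ← hg K, h]
  let e : kg G ↪g powerGraph G := ⟨⟨g, inj⟩, by
    intro H K
    change (powerGraph G).Adj (g H) (g K) ↔ (H.1 < K.1 ∨ K.1 < H.1)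
    rw [powerGraph_adj, ← Subgroup.zpowers_le, ← Subgroup.zpowers_le, hg, hg, inj.ne_iff,
      lt_iff_le_and_ne, lt_iff_le_and_ne]
    have : H ≠ K ↔ H.1 ≠ K.1 := by rw [Ne, Ne, Subtype.ext_iff]
    rw [this]
    have : H.1 ≠ K.1 ↔ K.1 ≠ H.1 := ne_comm
    tauto⟩
  apply acyclic_of
  · intro n hn
    exact ⟨fun f => (hc n hn).false (f.trans e)⟩
  · intro a b c hab hbc hac
    have ha := a.2.2
    have hb := b.2.2
    have hc := c.2.2
    have h1 : ∀ {x y : KV G}, (kg G).Adj x y → ArithmeticFunction.cardFactors (Nat.card x.1) ≠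
        ArithmeticFunction.cardFactors (Nat.card y.1) := by
      intro x y h
      rcases h with h | h
      · exact (omega_lt h).ne
      · exact (omega_lt h).ne'
    have := h1 hab
    have := h1 hbc
    have := h1 hac
    omega

theorem sup_cyc {G : Type*} [Group G] [Finite G] {H K : PV G} (h : (pg G).Adj H K) :
    ∃ g, Subgroup.zpowers g = H.1 ⊔ K.1 ∧ Nat.card (H.1 ⊔ K.1 : Subgroup G) = Nat.card H.1 * Nat.card K.1 := by
  obtain ⟨x, hx, ox⟩ := prime_gen H.2
  obtain ⟨y, hy, oy⟩ := prime_gen K.2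
  have hx' : x ∈ H.1 := hx ▸ Subgroup.mem_zpowers x
  have hy' : y ∈ K.1 := hy ▸ Subgroup.mem_zpowers y
  have hcop : (orderOf x).Coprime (orderOf y) := by
    rw [ox, oy]; exact (Nat.coprime_primes H.2 K.2).2 h.1
  have hxy : Commute x y := h.2 x hx' y hy'
  have ord := hxy.orderOf_mul_eq_mul_orderOf_of_coprime hcop
  have hle : Subgroup.zpowers (x * y) ≤ H.1 ⊔ K.1 := by
    rw [Subgroup.zpowers_le]
    exact Subgroup.mul_mem_sup hx' hy'
  have e : Subgroup.zpowers (x * y) = H.1 ⊔ K.1 := by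
    apply le_antisymm hle
    have hy2 : y ^ orderOf y = 1 := pow_orderOf_eq_one y
    have hx2 : x ^ orderOf x = 1 := pow_orderOf_eq_one x
    rw [← hx, ← hy]
    refine sup_le ?_ ?_
    · have h1 : x ^ orderOf y ∈ Subgroup.zpowers (x * y) :=
        Subgroup.mem_zpowers_iff.2 ⟨orderOf y, by rw [zpow_natCast, hxy.mul_pow, hy2, mul_one]⟩
      have h2 : x ∈ Subgroup.zpowers (x ^ orderOf y) := by
        apply cyc_mem' (Subgroup.mem_zpowers x) (Subgroup.pow_mem _ (Subgroup.mem_zpowers x) _)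
        rw [hcop.orderOf_pow]
      rw [Subgroup.zpowers_le]
      exact (Subgroup.zpowers_le.2 h1) h2
    · have h1 : y ^ orderOf x ∈ Subgroup.zpowers (x * y) :=
        Subgroup.mem_zpowers_iff.2 ⟨orderOf x, by rw [zpow_natCast, hxy.mul_pow, hx2, one_mul]⟩
      have h2 : y ∈ Subgroup.zpowers (y ^ orderOf x) := by
        apply cyc_mem' (Subgroup.mem_zpowers y) (Subgroup.pow_mem _ (Subgroup.mem_zpowers y) _)
        rw [hcop.symm.orderOf_pow]
      rw [Subgroup.zpowers_le]
      exact (Subgroup.zpowers_le.2 h1) h2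
  exact ⟨x * y, e, by rw [← e, Nat.card_zpowers, ord, ox, oy]⟩

def upV {G : Type*} [Group G] [Finite G] (H : PV G) : KV G :=
  ⟨H.1, (prime_gen H.2).imp fun _ h => h.1, Or.inl (ArithmeticFunction.cardFactors_eq_one_iff_prime.2 H.2)⟩

def joinV {G : Type*} [Group G] [Finite G] {H K : PV G} (h : (pg G).Adj H K) : KV G :=
  ⟨H.1 ⊔ K.1, (sup_cyc h).imp fun _ h => h.1, Or.inr (by
    obtain ⟨_, _, h2⟩ := sup_cyc h
    rw [h2, ArithmeticFunction.cardFactors_mul H.2.ne_zero K.2.ne_zero,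
      ArithmeticFunction.cardFactors_apply_prime H.2, ArithmeticFunction.cardFactors_apply_prime K.2])⟩

theorem pg_not_le {G : Type*} [Group G] [Finite G] {H K : PV G} (h : (pg G).Adj H K) : ¬ K.1 ≤ H.1 := by
  intro hle
  have h1 := Subgroup.card_dvd_of_le hle
  rw [Nat.prime_dvd_prime_iff_eq K.2 H.2] at h1
  exact h.1 h1.symm

theorem up_join {G : Type*} [Group G] [Finite G] {H K : PV G} (h : (pg G).Adj H K) :
    upV H ≠ joinV h ∧ (kg G).Adj (upV H) (joinV h) ∧ (kg G).Adj (upV K) (joinV h) := by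
  have h1 : H.1 < H.1 ⊔ K.1 := left_lt_sup.2 (pg_not_le h)
  have h2 : K.1 < H.1 ⊔ K.1 := right_lt_sup.2 (pg_not_le h.symm)
  exact ⟨fun e => h1.ne (congrArg Subtype.val e), Or.inl h1, Or.inl h2⟩

theorem join_inj {G : Type*} [Group G] [Finite G] {H K K' : PV G} (h : (pg G).Adj H K)
    (h' : (pg G).Adj H K') (e : H.1 ⊔ K.1 = H.1 ⊔ K'.1) : K = K' := by
  obtain ⟨g, hg, hc⟩ := sup_cyc h
  obtain ⟨g', hg', hc'⟩ := sup_cyc h'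
  rw [e, hc'] at hc
  have := Nat.eq_of_mul_eq_mul_left H.2.pos hc
  exact Subtype.ext (prime_unique K.2 this.symm (hg ▸ le_sup_right) (hg ▸ e ▸ le_sup_right))

open SimpleGraph in
theorem pg_acyclic {G : Type*} [Group G] [Finite G] (hc : IsChordal (powerGraph G)) :
    (pg G).IsAcyclic := by
  have hk := kg_acyclic hc
  rw [isAcyclic_iff_forall_adj_isBridge] at hk ⊢
  intro u v huv
  obtain ⟨hne, hu, hv⟩ := up_join huv
  have hb := hk hu
  rw [isBridge_iff] at hb ⊢
  intro hr
  apply hb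
  have hup : ∀ x y : PV G, upV x = upV y → x = y := by
    intro x y h; exact Subtype.ext (congrArg (fun z : KV G => z.1) h)
  have hnj : ∀ {x a b: PV G} (h : (pg G).Adj a b), upV x ≠ joinV h := by
    intro x a b h e
    have e1 : x.1 = a.1 ⊔ b.1 := congrArg (fun z : KV G => z.1) e
    obtain ⟨_, _, h2⟩ := sup_cyc h
    have h3 := x.2
    rw [e1, h2] at h3
    exact Nat.not_prime_mul a.2.ne_one b.2.ne_one h3
  have step : ∀ x y, ((pg G).deleteEdges {s(u,v)}).Adj x y →
      ((kg G).deleteEdges {s(upV u, joinV huv)}).Reachable (upV x) (upV y) := by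
    intro x y hxy
    rw [deleteEdges_adj] at hxy
    obtain ⟨hxy, hn⟩ := hxy
    simp only [Set.mem_singleton_iff] at hn
    obtain ⟨_, h1, h2⟩ := up_join hxy
    have a1 : ((kg G).deleteEdges {s(upV u, joinV huv)}).Adj (upV x) (joinV hxy) := by
      rw [deleteEdges_adj]
      refine ⟨h1, ?_⟩
      simp only [Set.mem_singleton_iff, Sym2.eq_iff, not_or, not_and]
      refine ⟨fun e1 e2 => ?_, fun e1 => absurd e1 (hnj huv)⟩
      have e1 := hup _ _ e1
      subst e1
      have := join_inj hxy huv (congrArg (fun z : KV G => z.1) e2)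
      subst this
      exact hn rfl
    have a2 : ((kg G).deleteEdges {s(upV u, joinV huv)}).Adj (upV y) (joinV hxy) := by
      rw [deleteEdges_adj]
      refine ⟨h2, ?_⟩
      simp only [Set.mem_singleton_iff, Sym2.eq_iff, not_or, not_and]
      refine ⟨fun e1 e2 => ?_, fun e1 => absurd e1 (hnj huv)⟩
      have e1 := hup _ _ e1
      subst e1
      have e3 : x.1 ⊔ y.1 = y.1 ⊔ v.1 := congrArg (fun z : KV G => z.1) e2
      have := join_inj hxy.symm huv (by rw [sup_comm, e3])
      subst this
      exact hn Sym2.eq_swap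
    exact a1.reachable.trans a2.symm.reachable
  have walk : ∀ {x y}, ((pg G).deleteEdges {s(u,v)}).Walk x y →
      ((kg G).deleteEdges {s(upV u, joinV huv)}).Reachable (upV x) (upV y) := by
    intro x y p
    induction p with
    | nil => exact Reachable.refl _
    | cons h p ih => exact (step _ _ h).trans ih
  obtain ⟨p⟩ := hr
  refine (walk p).trans (Adj.reachable ?_)
  rw [deleteEdges_adj]
  refine ⟨hv, ?_⟩
  simp only [Set.mem_singleton_iff, Sym2.eq_iff, not_or, not_and]
  exact ⟨fun e => absurd (hup _ _ e) huv.ne', fun e => absurd e (hnj huv)⟩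

theorem aut_facts {G : Type*} [Group G] [Finite G] {A : Subgroup G} (hA : (Nat.card A).Prime)
    {x y : G} (hx : x ∈ Subgroup.normalizer (A : Set G)) (hy : y ∈ Subgroup.normalizer (A : Set G)) :
    (∀ a ∈ A, (x * y * x⁻¹ * y⁻¹) * a = a * (x * y * x⁻¹ * y⁻¹)) ∧
    (orderOf x = Nat.card A → ∀ a ∈ A, x * a = a * x) ∧
    (∀ r : ℕ, r.Prime → orderOf x = r → orderOf y = r → (¬ ∀ a ∈ A, x * a = a * x) →
      ∃ m : ℤ, ∀ a ∈ A, (y * x ^ m) * a = a * (y * x ^ m)) := by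
  have := Fact.mk hA
  have : IsCyclic A := isCyclic_of_prime_card (p := Nat.card A) rfl
  have : IsCyclic (MulAut A) := (IsCyclic.mulAutMulEquiv A).isCyclic.2 inferInstance
  have hcard : Nat.card (MulAut A) = Nat.card A - 1 := by
    rw [IsCyclic.card_mulAut, Nat.totient_prime hA]
  set F := A.normalizerMonoidHom with hF
  have hker : ∀ n : Subgroup.normalizer (A : Set G), F n = 1 ↔ ∀ a ∈ A, n.1 * a = a * n.1 := by
    intro n
    rw [← MonoidHom.mem_ker, hF, Subgroup.normalizerMonoidHom_ker, Subgroup.mem_subgroupOf,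
      Subgroup.mem_centralizer_iff]
    exact forall₂_congr fun a _ => eq_comm
  have comm : ∀ α β : MulAut A, α * β = β * α := by
    let := IsCyclic.commGroup (α := MulAut A)
    intro α β; exact mul_comm α β
  let X : Subgroup.normalizer (A : Set G) := ⟨x, hx⟩
  let Y : Subgroup.normalizer (A : Set G) := ⟨y, hy⟩
  have oX : orderOf X = orderOf x := Subgroup.orderOf_mk _ _
  have oY : orderOf Y = orderOf y := Subgroup.orderOf_mk _ _
  refine ⟨?_, ?_, ?_⟩
  · apply (hker (X * Y * X⁻¹ * Y⁻¹)).1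
    simp only [map_mul, map_inv]
    rw [comm (F X) (F Y)]; group
  · intro ho
    apply (hker X).1
    have h1 : orderOf (F X) ∣ Nat.card A := by rw [← ho, ← oX]; exact orderOf_map_dvd F X
    have h2 : orderOf (F X) ∣ Nat.card A - 1 := by rw [← hcard]; exact orderOf_dvd_natCard _
    rcases (Nat.dvd_prime hA).1 h1 with h | h
    · exact orderOf_eq_one_iff.1 h
    · rw [h] at h2
      have := Nat.le_of_dvd (by have := hA.two_le; omega) h2
      have := hA.two_le; omega
  · intro r hr ox oy hn
    have h1 : orderOf (F X) ∣ r := by rw [← ox, ← oX]; exact orderOf_map_dvd F X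
    have h2 : orderOf (F Y) ∣ r := by rw [← oy, ← oY]; exact orderOf_map_dvd F Y
    have h3 : orderOf (F X) = r := by
      rcases (Nat.dvd_prime hr).1 h1 with h | h
      · exact absurd ((hker X).1 (orderOf_eq_one_iff.1 h)) hn
      · exact h
    obtain ⟨k, hk⟩ := Subgroup.mem_zpowers_iff.1 (cyc_mem (h3.symm ▸ h2 : orderOf (F Y) ∣ orderOf (F X)))
    refine ⟨-k, ?_⟩
    apply (hker (Y * X ^ (-k))).1
    rw [map_mul, map_zpow, zpow_neg, hk, mul_inv_cancel]

theorem card_conj {G : Type*} [Group G] (g : G) (H : Subgroup G) :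
    Nat.card (H.map (MulAut.conj g).toMonoidHom) = Nat.card H :=
  Nat.card_congr (H.equivMapOfInjective _ (MulAut.conj g).injective).toEquiv.symm

theorem conj_conj {G : Type*} [Group G] (g h : G) (H : Subgroup G) (e : g * h = 1) :
    (H.map (MulAut.conj h).toMonoidHom).map (MulAut.conj g).toMonoidHom = H := by
  rw [Subgroup.map_map]
  have : (MulAut.conj g).toMonoidHom.comp (MulAut.conj h).toMonoidHom = MonoidHom.id G := by
    ext x
    have h1 : h = g⁻¹ := eq_inv_of_mul_eq_one_right e
    subst h1
    simp [mul_assoc]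
  rw [this, Subgroup.map_id]

def conjIso {G : Type*} [Group G] (g : G) : pg G ≃g pg G where
  toFun H := ⟨H.1.map (MulAut.conj g).toMonoidHom, by rw [card_conj]; exact H.2⟩
  invFun H := ⟨H.1.map (MulAut.conj g⁻¹).toMonoidHom, by rw [card_conj]; exact H.2⟩
  left_inv H := Subtype.ext (conj_conj _ _ _ (by simp))
  right_inv H := Subtype.ext (conj_conj _ _ _ (by simp))
  map_rel_iff' := by
    intro H K
    change (_ ∧ _) ↔ (_ ∧ _)
    simp only [Equiv.coe_fn_mk, card_conj]
    refine and_congr Iff.rfl ?_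
    constructor
    · intro h x hx y hy
      have := h _ (Subgroup.mem_map_of_mem _ hx) _ (Subgroup.mem_map_of_mem _ hy)
      rw [← map_mul, ← map_mul] at this
      exact (MulAut.conj g).injective this
    · rintro h _ ⟨x, hx, rfl⟩ _ ⟨y, hy, rfl⟩
      rw [← map_mul, ← map_mul, h x hx y hy]

theorem conjIso_fix {G : Type*} [Group G] [Finite G] (g : G) (H : PV G) :
    conjIso g H = H ↔ g ∈ Subgroup.normalizer (H.1 : Set G) := by
  constructor
  · intro h
    have h1 : H.1.map (MulAut.conj g).toMonoidHom = H.1 := congrArg Subtype.val h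
    rw [Subgroup.mem_normalizer_iff]
    intro x
    constructor
    · intro hx
      rw [← h1]
      exact ⟨x, hx, by simp⟩
    · intro hx
      rw [← h1] at hx
      obtain ⟨y, hy, e⟩ := hx
      have : y = x := by simpa using e
      exact this ▸ hy
  · intro h
    rw [Subgroup.mem_normalizer_iff] at h
    apply Subtype.ext
    change H.1.map (MulAut.conj g).toMonoidHom = H.1
    apply Subgroup.eq_of_le_of_card_ge
    · rintro _ ⟨y, hy, rfl⟩
      simpa using (h y).1 hy
    · rw [card_conj]

open SimpleGraph in
theorem no_far {G : Type*} [Group G] [Finite G] (hac : (pg G).IsAcyclic) {c v : PV G}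
    (hcent : ∀ φ : pg G ≃g pg G, (pg G).Reachable c (φ c) → ¬ (pg G).Adj c (φ c) → φ c = c)
    (hr : (pg G).Reachable c v) (h5 : 5 ≤ (pg G).dist c v) : False := by
  obtain ⟨f, f0, fm, fa, fd⟩ := geod hr
  have reach : ∀ i ≤ 5, (pg G).Reachable c (f i) := by
    intro i
    induction i with
    | zero => intro _; rw [f0]
    | succ k ih => intro hk; exact (ih (by omega)).trans (fa k (by omega)).reachable
  have dd : ∀ i ≤ 5, (pg G).dist (f 0) (f i) = i := by
    intro i hi; rw [f0]; exact fd i (by omega)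
  have adj : ∀ i < 5, (pg G).Adj (f i) (f (i+1)) := fun i hi => fa i (by omega)
  have nadj : ∀ i j, i ≤ 5 → j ≤ 5 → i + 2 ≤ j → ¬ (pg G).Adj (f i) (f j) := by
    intro i j hi hj hij h
    have := h.diff_dist_adj (u := f 0)
    rw [dd i hi, dd j hj] at this
    omega
  have hne : ∀ i j, i ≤ 5 → j ≤ 5 → i ≠ j → f i ≠ f j := by
    intro i j hi hj hij h
    apply hij
    rw [← dd i hi, ← dd j hj, h]
  have norm0 : ∀ i ≤ 5, ∀ g, g ∈ Subgroup.normalizer ((f i).1 : Set G) → conjIso g (f 0) = f 0 := by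
    intro i hi g hg
    rw [f0]
    apply hcent
    · have h1 := (reach i hi).map (conjIso g).toHom
      have h2 : (conjIso g).toHom (f i) = f i := (conjIso_fix g _).2 hg
      rw [h2] at h1
      exact (reach i hi).trans h1.symm
    · intro h
      exact h.1 (card_conj g c.1).symm
  have norm : ∀ i ≤ 5, ∀ g, g ∈ Subgroup.normalizer ((f i).1 : Set G) → ∀ j ≤ i,
      g ∈ Subgroup.normalizer ((f j).1 : Set G) := by
    intro i hi g hg j hj
    rw [← conjIso_fix]
    exact fix_path hac (m := i) (fun k hk => adj k (by omega)) (fun k hk => dd k (by omega)) _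
      (norm0 i hi g hg) ((conjIso_fix g _).2 hg) j hj
  have norm' : ∀ i ≤ 5, ∀ g ∈ (f i).1, ∀ j ≤ i, g ∈ Subgroup.normalizer ((f j).1 : Set G) :=
    fun i hi g hg => norm i hi g (Subgroup.le_normalizer hg)
  have cardeq : ∀ i j, i ≤ 5 → j ≤ 5 → i + 2 ≤ j →
      (∀ x ∈ (f i).1, ∀ y ∈ (f j).1, x * y = y * x) → Nat.card (f i).1 = Nat.card (f j).1 := by
    intro i j hi hj hij h
    by_contra hn
    exact nadj i j hi hj hij ⟨hn, h⟩
  -- step 1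
  have s1 : ¬ ∀ x ∈ (f 0).1, ∀ y ∈ (f 3).1, x * y = y * x := by
    intro h
    have h02 : ∀ x ∈ (f 0).1, ∀ y ∈ (f 2).1, x * y = y * x := by
      intro x hx y hy
      have hx3 : x ∈ Subgroup.normalizer ((f 3).1 : Set G) := by
        rw [Subgroup.mem_normalizer_iff]
        intro z
        constructor
        · intro hz
          rw [h x hx z hz]; simpa using hz
        · intro hz
          have := h x hx _ hz
          have e : x * z * x⁻¹ = z := by
            have : x * (x * z * x⁻¹) = x * z := by rw [this]; group
            exact mul_left_cancel this
          rwa [e] at hz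
      have hx2 := Subgroup.mem_normalizer_iff.1 (norm 3 (by omega) x hx3 2 (by omega)) y
      have hy0 := Subgroup.mem_normalizer_iff.1 (norm' 2 (by omega) y hy 0 (by omega)) x⁻¹
      have m2 : x * y * x⁻¹ * y⁻¹ ∈ (f 2).1 := mul_mem (hx2.1 hy) (inv_mem hy)
      have m0 : x * y * x⁻¹ * y⁻¹ ∈ (f 0).1 := by
        have := mul_mem hx (hy0.1 (inv_mem hx))
        simpa [mul_assoc] using this
      by_contra hn
      have h1 : x * y * x⁻¹ * y⁻¹ ≠ 1 := by
        intro e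
        apply hn
        rw [mul_inv_eq_one, mul_inv_eq_iff_eq_mul] at e
        exact e
      exact hne 0 2 (by omega) (by omega) (by omega)
        (Subtype.ext ((prime_gen_of (f 0).2 m0 h1).symm.trans (prime_gen_of (f 2).2 m2 h1)))
    have e1 := cardeq 0 2 (by omega) (by omega) (by omega) h02
    have e2 := cardeq 0 3 (by omega) (by omega) (by omega) h
    exact (adj 2 (by omega)).1 (e1.symm.trans e2)
  obtain ⟨x, hx, ox⟩ := prime_gen (f 3).2
  obtain ⟨y, hy, oy⟩ := prime_gen (f 5).2
  have hx' : x ∈ (f 3).1 := hx ▸ Subgroup.mem_zpowers x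
  have hy' : y ∈ (f 5).1 := hy ▸ Subgroup.mem_zpowers y
  have x0 := norm' 3 (by omega) x hx' 0 (by omega)
  have y0 := norm' 5 (by omega) y hy' 0 (by omega)
  have y3 := norm' 5 (by omega) y hy' 3 (by omega)
  obtain ⟨a1, a2, a3⟩ := aut_facts (f 0).2 x0 y0
  have s1' : ¬ ∀ a ∈ (f 0).1, x * a = a * x := by
    intro h
    apply s1
    obtain ⟨z, hz, oz⟩ := prime_gen (f 0).2
    rw [← hz, ← hx]
    apply prime_comm
    exact (h z (hz ▸ Subgroup.mem_zpowers z)).symm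
  have hxy : x * y = y * x := by
    by_contra hn
    have h1 : x * y * x⁻¹ * y⁻¹ ≠ 1 := by
      intro e
      apply hn
      rw [mul_inv_eq_one, mul_inv_eq_iff_eq_mul] at e
      exact e
    have m3 : x * y * x⁻¹ * y⁻¹ ∈ (f 3).1 := by
      have := mul_mem hx' ((Subgroup.mem_normalizer_iff.1 y3 x⁻¹).1 (inv_mem hx'))
      simpa [mul_assoc] using this
    have hz := prime_gen_of (f 3).2 m3 h1
    apply s1'
    intro a ha
    exact prime_comm (a1 a ha) x (hz ▸ hx') a (Subgroup.mem_zpowers a)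
  have e35 : Nat.card (f 3).1 = Nat.card (f 5).1 := by
    apply cardeq 3 5 (by omega) (by omega) (by omega)
    rw [← hx, ← hy]
    exact prime_comm hxy
  have e30 : Nat.card (f 0).1 ≠ Nat.card (f 3).1 := fun e => s1' (a2 (by rw [ox, e]))
  obtain ⟨m, hm⟩ := a3 _ (f 3).2 ox (by rw [oy, e35]) s1'
  have hd1 : y * x ^ m ≠ 1 := by
    intro e
    have : y ∈ (f 3).1 := by
      rw [eq_inv_of_mul_eq_one_left e]
      exact inv_mem (zpow_mem hx' m)
    have hy1 : y ≠ 1 := by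
      intro h
      have := (f 5).2.one_lt
      rw [← oy, h, orderOf_one] at this
      omega
    exact hne 3 5 (by omega) (by omega) (by omega)
        (Subtype.ext ((prime_gen_of (f 3).2 this hy1).symm.trans hy))
  have hpow : (y * x ^ m) ^ Nat.card (f 3).1 = 1 := by
    have hc : Commute y (x ^ m) := (show Commute y x from hxy.symm).zpow_right m
    rw [hc.mul_pow]
    have : (x ^ m) ^ Nat.card (f 3).1 = 1 := by
      rw [← zpow_natCast, zpow_comm, zpow_natCast, ← ox, pow_orderOf_eq_one, one_zpow]
    rw [this, e35, ← oy, pow_orderOf_eq_one, mul_one]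
  have hord : orderOf (y * x ^ m) = Nat.card (f 3).1 := by
    rcases (Nat.dvd_prime (f 3).2).1 (orderOf_dvd_of_pow_eq_one hpow) with h | h
    · exact absurd (orderOf_eq_one_iff.1 h) hd1
    · exact h
  let D : PV G := ⟨Subgroup.zpowers (y * x ^ m), by rw [Nat.card_zpowers, hord]; exact (f 3).2⟩
  have hD : Nat.card D.1 = Nat.card (f 3).1 := by
    change Nat.card (Subgroup.zpowers (y * x ^ m)) = _
    rw [Nat.card_zpowers, hord]
  have d0 : (pg G).Adj (f 0) D := by
    refine ⟨by rw [hD]; exact e30, ?_⟩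
    intro a ha b hb
    exact (prime_comm (hm a ha) b hb a (Subgroup.mem_zpowers a)).symm
  have d4 : (pg G).Adj D (f 4) := by
    refine ⟨by rw [hD]; exact (adj 3 (by omega)).1, ?_⟩
    intro b hb a ha
    refine prime_comm ?_ b hb a (Subgroup.mem_zpowers a)
    have c1 : Commute x a := (adj 3 (by omega)).2 x hx' a ha
    have c2 : Commute y a := ((adj 4 (by omega)).2 a ha y hy').symm
    exact c2.mul_left (c1.zpow_left m)
  have := dist_le (Walk.cons d0 (Walk.cons d4 Walk.nil))
  rw [dd 4 (by omega)] at this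
  simp at this

open SimpleGraph in
theorem four_cycle {V : Type*} {Γ : SimpleGraph V} (hc : IsChordal Γ) {a b c d : V}
    (hab : Γ.Adj a b) (hbc : Γ.Adj b c) (hcd : Γ.Adj c d) (hda : Γ.Adj d a)
    (hac : ¬ Γ.Adj a c) (hbd : ¬ Γ.Adj b d) (nac : a ≠ c) (nbd : b ≠ d) : False := by
  refine (hc 4 le_rfl).false ⟨⟨![a, b, c, d], ?_⟩, ?_⟩
  · intro i j h
    fin_cases i <;> fin_cases j <;> simp_all
    all_goals first
      | exact absurd rfl hab.ne | exact absurd rfl hbc.ne | exact absurd rfl hcd.ne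
      | exact absurd rfl hda.ne
  · intro i j
    have hca : ¬ Γ.Adj c a := fun h => hac h.symm
    have hdb : ¬ Γ.Adj d b := fun h => hbd h.symm
    rw [cycleGraph_adj']
    change Γ.Adj (![a, b, c, d] i) (![a, b, c, d] j) ↔ _
    fin_cases i <;> fin_cases j
    all_goals first
      | exact iff_of_true hab (by decide)
      | exact iff_of_true hbc (by decide)
      | exact iff_of_true hcd (by decide)
      | exact iff_of_true hda (by decide)
      | exact iff_of_true hab.symm (by decide)
      | exact iff_of_true hbc.symm (by decide)
      | exact iff_of_true hcd.symm (by decide)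
      | exact iff_of_true hda.symm (by decide)
      | exact iff_of_false hac (by decide)
      | exact iff_of_false hca (by decide)
      | exact iff_of_false hbd (by decide)
      | exact iff_of_false hdb (by decide)
      | exact iff_of_false (Γ.irrefl) (by decide)

theorem inter {G : Type*} [Group G] [Finite G] (hc : IsChordal (powerGraph G)) {t t' : G}
    (h1 : t ∉ Subgroup.zpowers t') (h2 : t' ∉ Subgroup.zpowers t) {P Q : PV G}
    (hPQ : Nat.card P.1 ≠ Nat.card Q.1) (p1 : P.1 ≤ Subgroup.zpowers t)
    (p2 : P.1 ≤ Subgroup.zpowers t') (q1 : Q.1 ≤ Subgroup.zpowers t)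
    (q2 : Q.1 ≤ Subgroup.zpowers t') : False := by
  obtain ⟨x, hx, ox⟩ := prime_gen P.2
  obtain ⟨y, hy, oy⟩ := prime_gen Q.2
  have hx' : x ∈ P.1 := hx ▸ Subgroup.mem_zpowers x
  have hy' : y ∈ Q.1 := hy ▸ Subgroup.mem_zpowers y
  have key : ∀ {a b : PV G} {u v : G}, Nat.card a.1 ≠ Nat.card b.1 → orderOf u = Nat.card a.1 →
      orderOf v = Nat.card b.1 → u ∉ Subgroup.zpowers v := by
    intro a b u v hab hu hv h
    have := orderOf_dvd_of_mem_zpowers h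
    rw [hu, hv, Nat.prime_dvd_prime_iff_eq a.2 b.2] at this
    exact hab this
  have nxy : x ≠ y := by
    rintro rfl
    exact hPQ (ox.symm.trans oy)
  refine four_cycle hc (a := t) (b := x) (c := t') (d := y) ?_ ?_ ?_ ?_ ?_ ?_ ?_ nxy
  · exact powerGraph_adj.2 ⟨fun e => h1 (e ▸ p2 hx'), Or.inr (p1 hx')⟩
  · exact powerGraph_adj.2 ⟨fun e => h2 (e ▸ p1 hx'), Or.inl (p2 hx')⟩
  · exact powerGraph_adj.2 ⟨fun e => h2 (e ▸ q1 hy'), Or.inr (q2 hy')⟩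
  · exact powerGraph_adj.2 ⟨fun e => h1 (e ▸ q2 hy'), Or.inl (q1 hy')⟩
  · rw [powerGraph_adj]; tauto
  · rw [powerGraph_adj]
    rintro ⟨-, h | h⟩
    · exact key hPQ ox oy h
    · exact key hPQ.symm oy ox h
  · rintro rfl
    exact h1 (Subgroup.mem_zpowers _)

theorem exists_PV {G : Type*} [Group G] [Finite G] {b : G} {q : ℕ} (hq : q.Prime)
    (h : q ∣ orderOf b) : ∃ P : PV G, Nat.card P.1 = q ∧ P.1 ≤ Subgroup.zpowers b := by
  have ho : orderOf (b ^ (orderOf b / q)) = q := orderOf_pow_orderOf_div (orderOf_pos b).ne' h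
  refine ⟨⟨Subgroup.zpowers (b ^ (orderOf b / q)), by rw [Nat.card_zpowers, ho]; exact hq⟩, ?_, ?_⟩
  · change Nat.card (Subgroup.zpowers _) = _
    rw [Nat.card_zpowers, ho]
  · exact Subgroup.zpowers_le.2 (Subgroup.pow_mem _ (Subgroup.mem_zpowers b) _)

theorem main_up {G : Type*} [Group G] [Fintype G] (hc : IsChordal (powerGraph G)) {b t : ℕ → G}
    (hbt : ∀ k ≤ 9, b k ∈ Subgroup.zpowers (t k))
    (hbt' : ∀ k ≤ 8, b (k+1) ∈ Subgroup.zpowers (t k))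
    (nb : ∀ k ≤ 9, ∀ l ≤ 9, k ≠ l → b k ∉ Subgroup.zpowers (b l))
    (nt : ∀ k ≤ 9, ∀ l ≤ 9, k ≠ l → t k ∉ Subgroup.zpowers (t l)) : False := by
  classical
  have hle : ∀ k ≤ 9, Subgroup.zpowers (b k) ≤ Subgroup.zpowers (t k) :=
    fun k hk => Subgroup.zpowers_le.2 (hbt k hk)
  have hle' : ∀ k ≤ 8, Subgroup.zpowers (b (k+1)) ≤ Subgroup.zpowers (t k) :=
    fun k hk => Subgroup.zpowers_le.2 (hbt' k hk)
  have uniqp : ∀ k ≤ 8, ∀ p q : ℕ, p.Prime → q.Prime → p ∣ orderOf (b (k+1)) →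
      q ∣ orderOf (b (k+1)) → p = q := by
    intro k hk p q hp hq h1 h2
    by_contra hne
    obtain ⟨P, cP, lP⟩ := exists_PV hp h1
    obtain ⟨Q, cQ, lQ⟩ := exists_PV hq h2
    exact inter hc (nt k (by omega) (k+1) (by omega) (by omega)) (nt (k+1) (by omega) k (by omega) (by omega))
      (P := P) (Q := Q) (by rw [cP, cQ]; exact hne) (lP.trans (hle' k hk))
      (lP.trans (hle (k+1) (by omega))) (lQ.trans (hle' k hk)) (lQ.trans (hle (k+1) (by omega)))
  have ex : ∀ k ≤ 8, ∃ q : ℕ, q.Prime ∧ q ∣ orderOf (b k) ∧ ¬ q ∣ orderOf (b (k+1)) := by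
    intro k hk
    by_contra! hcon
    have hn1 : orderOf (b (k+1)) ≠ 1 := by
      intro h
      rw [orderOf_eq_one_iff] at h
      apply nb (k+1) (by omega) k (by omega) (by omega)
      rw [h]; exact one_mem _
    obtain ⟨p, hp, hpd⟩ := Nat.exists_prime_and_dvd hn1
    have e1 := Nat.eq_prime_pow_of_unique_prime_dvd (p := p) (orderOf_pos (b (k+1))).ne'
      (fun {d} hd hdd => uniqp k hk d p hd hp hdd hpd)
    have e2 := Nat.eq_prime_pow_of_unique_prime_dvd (p := p) (orderOf_pos (b k)).ne'
      (fun {d} hd hdd => uniqp k hk d p hd hp (hcon d hd hdd) hpd)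
    rcases le_total (orderOf (b (k+1))).primeFactorsList.length (orderOf (b k)).primeFactorsList.length with h | h
    · have : orderOf (b (k+1)) ∣ orderOf (b k) := by
        rw [e1, e2]; exact pow_dvd_pow p h
      exact nb (k+1) (by omega) k (by omega) (by omega) (cyc_mem' (hbt' k hk) (hbt k (by omega)) this)
    · have : orderOf (b k) ∣ orderOf (b (k+1)) := by
        rw [e1, e2]; exact pow_dvd_pow p h
      exact nb k (by omega) (k+1) (by omega) (by omega) (cyc_mem' (hbt k (by omega)) (hbt' k hk) this)
  have exP : ∀ k ≤ 9, ∃ P : PV G, P.1 ≤ Subgroup.zpowers (b k) ∧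
      (k ≤ 8 → ¬ Nat.card P.1 ∣ orderOf (b (k+1))) := by
    intro k hk
    by_cases h8 : k ≤ 8
    · obtain ⟨q, hq, h1, h2⟩ := ex k h8
      obtain ⟨P, cP, lP⟩ := exists_PV hq h1
      exact ⟨P, lP, fun _ => cP ▸ h2⟩
    · have hn1 : orderOf (b k) ≠ 1 := by
        intro h
        rw [orderOf_eq_one_iff] at h
        apply nb k hk 0 (by omega) (by omega)
        rw [h]; exact one_mem _
      obtain ⟨p, hp, hpd⟩ := Nat.exists_prime_and_dvd hn1
      obtain ⟨P, cP, lP⟩ := exists_PV hp hpd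
      exact ⟨P, lP, fun h => absurd h h8⟩
  have : Nonempty (PV G) := ⟨(exP 0 (by omega)).choose⟩
  choose! P hP1 hP2 using exP
  have hcard : ∀ k ≤ 8, Nat.card (P k).1 ≠ Nat.card (P (k+1)).1 := by
    intro k hk e
    apply hP2 k (by omega) hk
    rw [e, ← Nat.card_zpowers]
    exact Subgroup.card_dvd_of_le (hP1 (k+1) (by omega))
  have hadj : ∀ i < 9, (pg G).Adj (P i) (P (i+1)) := by
    intro i hi
    refine ⟨hcard i (by omega), fun x hx y hy => ?_⟩
    exact prime_comm rfl x (hle i (by omega) (hP1 i (by omega) hx)) y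
      (hle' i (by omega) (hP1 (i+1) (by omega) hy))
  have hne : ∀ i < 8, P i ≠ P (i+2) := by
    intro i hi e
    refine inter hc (nt i (by omega) (i+1) (by omega) (by omega)) (nt (i+1) (by omega) i (by omega) (by omega))
      (hcard i (by omega)) ((hP1 i (by omega)).trans (hle i (by omega))) ?_
      ((hP1 (i+1) (by omega)).trans (hle' i (by omega))) ((hP1 (i+1) (by omega)).trans (hle (i+1) (by omega)))
    rw [e]
    exact (hP1 (i+2) (by omega)).trans (hle' (i+1) (by omega))
  have hac := pg_acyclic hc
  have : Fintype (PV G) := Fintype.ofFinite _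
  obtain ⟨c, hr, hcent⟩ := exists_center hac (P 0)
  obtain ⟨v, hv, hd⟩ := far_vertex hac hr.symm hadj hne
  exact no_far hac hcent hv hd

theorem main_path {G : Type*} [Group G] [Fintype G] (hc : IsChordal (powerGraph G)) {f : ℕ → G}
    (hinj : ∀ i < 20, ∀ j < 20, f i = f j → i = j)
    (hadj : ∀ i < 20, ∀ j < 20, ((powerGraph G).Adj (f i) (f j) ↔ i + 1 = j ∨ j + 1 = i))
    (h0 : f 0 ∈ Subgroup.zpowers (f 1)) : False := by
  have non : ∀ i < 20, ∀ j < 20, i + 2 ≤ j ∨ j + 2 ≤ i → f i ∉ Subgroup.zpowers (f j) := by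
    intro i hi j hj hij h
    have := (hadj i hi j hj).1 (powerGraph_adj.2 ⟨fun e => by have := hinj i hi j hj e; omega, Or.inl h⟩)
    omega
  have step : ∀ i < 19, f i ∈ Subgroup.zpowers (f (i+1)) ∨ f (i+1) ∈ Subgroup.zpowers (f i) := by
    intro i hi
    exact (powerGraph_adj.1 ((hadj i (by omega) (i+1) (by omega)).2 (Or.inl rfl))).2
  have ud : ∀ i < 18, f i ∈ Subgroup.zpowers (f (i+1)) → f (i+2) ∈ Subgroup.zpowers (f (i+1)) := by
    intro i hi h
    rcases step (i+1) (by omega) with h1 | h1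
    · exact absurd ((Subgroup.zpowers_le.2 h1) h) (non i (by omega) (i+2) (by omega) (by omega))
    · exact h1
  have du : ∀ i < 18, f (i+1) ∈ Subgroup.zpowers (f i) → f (i+1) ∈ Subgroup.zpowers (f (i+2)) := by
    intro i hi h
    rcases step (i+1) (by omega) with h1 | h1
    · exact h1
    · exact absurd ((Subgroup.zpowers_le.2 h) h1) (non (i+2) (by omega) i (by omega) (by omega))
  have up : ∀ k ≤ 9, f (2*k) ∈ Subgroup.zpowers (f (2*k+1)) := by
    intro k
    induction k with
    | zero => intro _; exact h0
    | succ k ih =>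
      intro hk
      exact du (2*k+1) (by omega) (ud (2*k) (by omega) (ih (by omega)))
  refine main_up hc (b := fun k => f (2*k)) (t := fun k => f (2*k+1)) up ?_ ?_ ?_
  · intro k hk
    exact ud (2*k) (by omega) (up k (by omega))
  · intro k hk l hl hkl
    exact non _ (by omega) _ (by omega) (by omega)
  · intro k hk l hl hkl
    exact non _ (by omega) _ (by omega) (by omega)

theorem stmt0 (G : Type*) [Group G] [Fintype G]
    (hchordal : IsChordal (powerGraph G)) (L : ℕ)
    (hpath : Nonempty (SimpleGraph.pathGraph L ↪g powerGraph G)) :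
    L ≤ 19 := by
  by_contra hL
  obtain ⟨e⟩ := hpath
  let f : ℕ → G := fun i => if h : i < L then e ⟨i, h⟩ else 1
  have hf : ∀ i (h : i < 20), f i = e ⟨i, by omega⟩ := fun i h => dif_pos (by omega)
  have hinj : ∀ i < 20, ∀ j < 20, f i = f j → i = j := by
    intro i hi j hj h
    rw [hf i hi, hf j hj] at h
    simpa using e.injective h
  have hadj : ∀ i < 20, ∀ j < 20, ((powerGraph G).Adj (f i) (f j) ↔ i + 1 = j ∨ j + 1 = i) := by
    intro i hi j hj
    rw [hf i hi, hf j hj, e.map_adj_iff, SimpleGraph.pathGraph_adj]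
  have h0 := (powerGraph_adj.1 ((hadj 0 (by omega) 1 (by omega)).2 (Or.inl rfl))).2
  rcases h0 with h0 | h0
  · exact main_path hchordal hinj hadj h0
  · rcases (powerGraph_adj.1 ((hadj 19 (by omega) 18 (by omega)).2 (Or.inr rfl))).2 with h1 | h1
    · refine main_path hchordal (f := fun i => f (19 - i)) ?_ ?_ (by simpa using h1)
      · intro i hi j hj h
        have := hinj _ (by omega) _ (by omega) h
        omega
      · intro i hi j hj
        rw [hadj _ (by omega) _ (by omega)]
        omega
    · -- both ends point inwards: impossible by parity
      have non : ∀ i < 20, ∀ j < 20, i + 2 ≤ j ∨ j + 2 ≤ i → f i ∉ Subgroup.zpowers (f j) := by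
        intro i hi j hj hij h
        have := (hadj i hi j hj).1 (powerGraph_adj.2 ⟨fun e => by have := hinj i hi j hj e; omega, Or.inl h⟩)
        omega
      have step : ∀ i < 19, f i ∈ Subgroup.zpowers (f (i+1)) ∨ f (i+1) ∈ Subgroup.zpowers (f i) := by
        intro i hi
        exact (powerGraph_adj.1 ((hadj i (by omega) (i+1) (by omega)).2 (Or.inl rfl))).2
      have down : ∀ k ≤ 9, f (2*k+1) ∈ Subgroup.zpowers (f (2*k)) := by
        intro k
        induction k with
        | zero => intro _; exact h0
        | succ k ih =>
          intro hk
          have h2 := ih (by omega)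
          have h3 : f (2*k+1) ∈ Subgroup.zpowers (f (2*k+2)) := by
            rcases step (2*k+1) (by omega) with h | h
            · exact h
            · exact absurd ((Subgroup.zpowers_le.2 h2) h) (non _ (by omega) _ (by omega) (by omega))
          rcases step (2*k+2) (by omega) with h | h
          · exact absurd ((Subgroup.zpowers_le.2 h) h3) (non _ (by omega) _ (by omega) (by omega))
          · exact h
      have h2 := down 9 le_rfl
      have h3 : f 17 ∈ Subgroup.zpowers (f 18) := by
        rcases step 17 (by omega) with h | h
        · exact h
        · exact absurd ((Subgroup.zpowers_le.2 (down 8 (by omega))) h) (non _ (by omega) _ (by omega) (by omega))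
      exact non 17 (by omega) 19 (by omega) (by omega) ((Subgroup.zpowers_le.2 h1) h3)
end

section
/- Let G be a finite group whose power graph is chordal and whose order is p^a · q^b for distinct primes p and q and natural numbers a, b. Then every induced path in the power graph of G has at most 15 vertices; that is, if there is a graph embedding of the path graph on L vertices into the power graph of G, then L ≤ 15. -/
namespace PG

lemma cyc_false {V : Type*} {Γ : SimpleGraph V} (hch : IsChordal Γ) (m : ℕ) (hm : 4 ≤ m)
    (F : ℕ → V)
    (h : ∀ i j, i < j → j < m → F i ≠ F j ∧
      (Γ.Adj (F i) (F j) ↔ (j = i + 1 ∨ (i = 0 ∧ j + 1 = m)))) : False := by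
  refine (hch m hm).false ⟨⟨fun i => F i.1, ?_⟩, ?_⟩
  · intro a b hab
    by_contra hne
    have hne' : a.1 ≠ b.1 := fun h => hne (Fin.ext h)
    rcases lt_or_gt_of_ne hne' with hl | hl
    · exact (h _ _ hl b.2).1 hab
    · exact (h _ _ hl a.2).1 hab.symm
  · have key : ∀ a b : Fin m, a.1 < b.1 →
        (Γ.Adj (F a) (F b) ↔ (SimpleGraph.cycleGraph m).Adj a b) := by
      intro a b hl
      rw [(h _ _ hl b.2).2, SimpleGraph.cycleGraph_adj', Fin.sub_def, Fin.sub_def]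
      have := b.2
      simp only
      rw [Nat.mod_eq_of_lt (by omega : m - b.1 + a.1 < m)]
      rw [show m - a.1 + b.1 = (b.1 - a.1) + m by omega, Nat.add_mod_right,
        Nat.mod_eq_of_lt (by omega)]
      omega
    intro a b
    change Γ.Adj (F a) (F b) ↔ _
    rcases lt_trichotomy a.1 b.1 with hl | hl | hl
    · exact key a b hl
    · have : a = b := Fin.ext hl
      subst this; simp
    · rw [SimpleGraph.adj_comm, SimpleGraph.adj_comm _ a b]; exact key b a hl

lemma pg_adj {G : Type*} [Group G] {x y : G} : (powerGraph G).Adj x y ↔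
    x ≠ y ∧ (x ∈ Subgroup.zpowers y ∨ y ∈ Subgroup.zpowers x) := by
  simp [powerGraph]

lemma mem_of_dvd {G : Type*} [Group G] [Finite G] {u x y : G}
    (hx : x ∈ Subgroup.zpowers u) (hy : y ∈ Subgroup.zpowers u)
    (hd : orderOf x ∣ orderOf y) : x ∈ Subgroup.zpowers y := by
  classical
  have := Fintype.ofFinite G
  have : Fintype (Subgroup.zpowers u) := Fintype.ofFinite _
  have h1 := IsCyclic.card_pow_eq_one_le (α := Subgroup.zpowers u) (n := orderOf y) (orderOf_pos y)
  let y' : Subgroup.zpowers u := ⟨y, hy⟩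
  let x' : Subgroup.zpowers u := ⟨x, hx⟩
  have hy' : orderOf y' = orderOf y := Subgroup.orderOf_mk y hy
  have h2 : (Finset.univ.filter (fun b : Subgroup.zpowers u => b ∈ Subgroup.zpowers y')) =
      Finset.univ.filter (fun b => b ^ orderOf y = 1) := by
    apply Finset.eq_of_subset_of_card_le
    · intro b hb
      simp only [Finset.mem_filter, Finset.mem_univ, true_and] at hb ⊢
      rw [← hy']
      exact orderOf_dvd_iff_pow_eq_one.1 (orderOf_dvd_of_mem_zpowers hb)
    · refine h1.trans ?_
      rw [← hy', ← Fintype.card_zpowers, Fintype.card_subtype]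
  have h3 : x' ∈ Finset.univ.filter (fun b : Subgroup.zpowers u => b ^ orderOf y = 1) := by
    simp only [Finset.mem_filter, Finset.mem_univ, true_and]
    apply orderOf_dvd_iff_pow_eq_one.1
    rwa [Subgroup.orderOf_mk]
  rw [← h2] at h3
  simp only [Finset.mem_filter, Finset.mem_univ, true_and] at h3
  obtain ⟨k, hk⟩ := Subgroup.mem_zpowers_iff.1 h3
  exact Subgroup.mem_zpowers_iff.2 ⟨k, congrArg Subtype.val hk⟩

/-- incomparable elements cannot share elements of both prime orders -/
lemma no_share {G : Type*} [Group G] [Finite G] {p q : ℕ} (hp : p.Prime) (hq : q.Prime)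
    (hpq : p ≠ q) (hch : IsChordal (powerGraph G)) {u v x y : G}
    (huv : u ∉ Subgroup.zpowers v) (hvu : v ∉ Subgroup.zpowers u)
    (hx : orderOf x = p) (hy : orderOf y = q)
    (hxu : x ∈ Subgroup.zpowers u) (hxv : x ∈ Subgroup.zpowers v)
    (hyu : y ∈ Subgroup.zpowers u) (hyv : y ∈ Subgroup.zpowers v) : False := by
  have hxy : x ∉ Subgroup.zpowers y := fun h => by
    have := orderOf_dvd_of_mem_zpowers h
    rw [hx, hy] at this
    exact hpq ((Nat.prime_dvd_prime_iff_eq hp hq).1 this)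
  have hyx : y ∉ Subgroup.zpowers x := fun h => by
    have := orderOf_dvd_of_mem_zpowers h
    rw [hx, hy] at this
    exact hpq ((Nat.prime_dvd_prime_iff_eq hq hp).1 this).symm
  have n1 : u ≠ x := by rintro rfl; exact huv hxv
  have n2 : u ≠ y := by rintro rfl; exact huv hyv
  have n3 : v ≠ x := by rintro rfl; exact hvu hxu
  have n4 : v ≠ y := by rintro rfl; exact hvu hyu
  have n5 : u ≠ v := by rintro rfl; exact huv (Subgroup.mem_zpowers u)
  have n6 : x ≠ y := by rintro rfl; exact hxy (Subgroup.mem_zpowers x)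
  refine cyc_false hch 4 le_rfl
    (fun i => if i = 0 then u else if i = 1 then x else if i = 2 then v else y) ?_
  intro i j hij hj
  have : (i = 0 ∧ j = 1) ∨ (i = 0 ∧ j = 2) ∨ (i = 0 ∧ j = 3) ∨ (i = 1 ∧ j = 2) ∨
    (i = 1 ∧ j = 3) ∨ (i = 2 ∧ j = 3) := by omega
  rcases this with ⟨rfl, rfl⟩ | ⟨rfl, rfl⟩ | ⟨rfl, rfl⟩ | ⟨rfl, rfl⟩ | ⟨rfl, rfl⟩ | ⟨rfl, rfl⟩ <;>
    simp [pg_adj, *, n3.symm]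

/-- subdivision graph of prime order subgroups -/
def B (G : Type*) [Group G] (p q : ℕ) (hpq : p ≠ q) : SimpleGraph (Subgroup G) where
  Adj X Y := ((Nat.card X = p ∧ Nat.card Y = q) ∨ (Nat.card X = q ∧ Nat.card Y = p)) ∧
    ∀ x ∈ X, ∀ y ∈ Y, x * y = y * x
  symm := ⟨fun X Y h => ⟨by tauto, fun y hy x hx => (h.2 x hx y hy).symm⟩⟩
  loopless := ⟨fun X h => by
    rcases h.1 with h | h
    · exact hpq (h.1.symm.trans h.2)
    · exact hpq (h.2.symm.trans h.1)⟩

lemma exists_gen {G : Type*} [Group G] [Finite G] {p : ℕ} (hp : p.Prime) {X : Subgroup G}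
    (h : Nat.card X = p) : ∃ g, X = Subgroup.zpowers g ∧ orderOf g = p := by
  have := Fact.mk hp
  have : IsCyclic X := isCyclic_of_prime_card h
  obtain ⟨g, hg⟩ := IsCyclic.exists_generator (α := X)
  have : X = Subgroup.zpowers g.1 := by
    ext x
    constructor
    · intro hx
      obtain ⟨k, hk⟩ := Subgroup.mem_zpowers_iff.1 (hg ⟨x, hx⟩)
      exact Subgroup.mem_zpowers_iff.2 ⟨k, congrArg Subtype.val hk⟩
    · intro hx
      exact (Subgroup.zpowers_le.2 g.2) hx
  refine ⟨g, this, ?_⟩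
  rw [← h]; conv_rhs => rw [this]
  exact (Nat.card_zpowers _).symm

lemma lt_of_norm {G : Type*} [Group G] [Finite G] {r s : ℕ} (hr : r.Prime)
    {X Y : Subgroup G} (hX : Nat.card X = r) (hY : Nat.card Y = s)
    (hn : ∀ x ∈ X, ∀ y ∈ Y, x * y * x⁻¹ ∈ Y)
    (hc : ¬ ∀ x ∈ X, ∀ y ∈ Y, x * y = y * x) : r < s := by
  classical
  push Not at hc
  obtain ⟨x, hx, y, hy, hxy⟩ := hc
  have hy1 : y ≠ 1 := by rintro rfl; simp at hxy
  have hcen : ∀ z ∈ X, z * y = y * z → z = 1 := by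
    intro z hz hzy
    by_contra hz1
    have := Fact.mk hr
    have h1 := mem_zpowers_of_prime_card (G := X) (g := ⟨z, hz⟩) (g' := ⟨x, hx⟩) hX
      (by simpa [Subtype.ext_iff] using hz1)
    obtain ⟨k, hk⟩ := Subgroup.mem_zpowers_iff.1 h1
    have hk' : z ^ k = x := congrArg Subtype.val hk
    apply hxy
    rw [← hk']
    exact (show Commute z y from hzy).zpow_left k
  let f : X → {w : Y // w ≠ 1} := fun z => ⟨⟨z.1 * y * z.1⁻¹, hn _ z.2 _ hy⟩, by
    simp [Subtype.ext_iff, hy1]⟩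
  have hf : Function.Injective f := by
    intro z w hzw
    have h : z.1 * y * z.1⁻¹ = w.1 * y * w.1⁻¹ := congrArg (fun t => t.1.1) hzw
    have := hcen (w.1⁻¹ * z.1) (mul_mem (inv_mem w.2) z.2) (by
      have h2 : z.1 * y = w.1 * y * w.1⁻¹ * z.1 := by rw [← h]; group
      rw [mul_assoc, h2]; group)
    exact Subtype.ext (inv_mul_eq_one.1 this).symm
  have h1 := Nat.card_le_card_of_injective f hf
  have h2 : Nat.card {w : Y // w ≠ 1} < Nat.card Y := by
    have := Fintype.ofFinite Y
    rw [Nat.card_eq_fintype_card, Nat.card_eq_fintype_card]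
    exact Fintype.card_subtype_lt (x := 1) (by simp)
  omega

/-- cyclic successor -/
def sc (n i : ℕ) : ℕ := if i + 1 = n then 0 else i + 1

lemma cycle_elems {G : Type*} [Group G] [Finite G] {p q : ℕ} (hp : p.Prime) (hq : q.Prime)
    (hpq : p ≠ q) (hch : IsChordal (powerGraph G)) (n : ℕ) (hn : 3 ≤ n) (g : ℕ → G)
    (ho : ∀ i < n, (orderOf (g i) = p ∧ orderOf (g (sc n i)) = q) ∨
      (orderOf (g i) = q ∧ orderOf (g (sc n i)) = p))
    (hc : ∀ i < n, g i * g (sc n i) = g (sc n i) * g i)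
    (hinj : ∀ i < n, ∀ j < n, g i ∈ Subgroup.zpowers (g j) → g j ∈ Subgroup.zpowers (g i) →
      i = j) : False := by
  have hcop : Nat.Coprime p q := (Nat.coprime_primes hp hq).2 hpq
  have hs : ∀ i < n, sc n i < n := by intro i hi; unfold sc; split_ifs <;> omega
  have hoh : ∀ i < n, orderOf (g i * g (sc n i)) = p * q := by
    intro i hi
    have h1 : Nat.Coprime (orderOf (g i)) (orderOf (g (sc n i))) := by
      rcases ho i hi with h | h
      · rw [h.1, h.2]; exact hcop
      · rw [h.1, h.2]; exact hcop.symm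
    rw [Commute.orderOf_mul_eq_mul_orderOf_of_coprime (hc i hi) h1]
    rcases ho i hi with h | h
    · rw [h.1, h.2]
    · rw [h.1, h.2, mul_comm]
  have hpr : ∀ i < n, orderOf (g i) = p ∨ orderOf (g i) = q := by
    intro i hi; rcases ho i hi with h | h
    · exact Or.inl h.1
    · exact Or.inr h.1
  -- membership of the factors
  have hm1 : ∀ i < n, g i ∈ Subgroup.zpowers (g i * g (sc n i)) ∧
      g (sc n i) ∈ Subgroup.zpowers (g i * g (sc n i)) := by
    intro i hi
    have aux : ∀ x y : G, x * y = y * x → Nat.Coprime (orderOf x) (orderOf y) →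
        x ∈ Subgroup.zpowers (x * y) := by
      intro x y hxy hcp
      have h1 : (x * y) ^ orderOf y ∈ Subgroup.zpowers (x * y) :=
        Subgroup.pow_mem _ (Subgroup.mem_zpowers _) _
      have h2 : (x * y) ^ orderOf y = x ^ orderOf y := by
        rw [(show Commute x y from hxy).mul_pow, pow_orderOf_eq_one, mul_one]
      rw [h2] at h1
      have h3 : x ∈ Subgroup.zpowers (x ^ orderOf y) := by
        apply mem_of_dvd (u := x) (Subgroup.mem_zpowers _)
          (Subgroup.pow_mem _ (Subgroup.mem_zpowers _) _)
        rw [Nat.Coprime.orderOf_pow hcp]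
      exact (Subgroup.zpowers_le.2 h1) h3
    have h1 : Nat.Coprime (orderOf (g i)) (orderOf (g (sc n i))) := by
      rcases ho i hi with h | h
      · rw [h.1, h.2]; exact hcop
      · rw [h.1, h.2]; exact hcop.symm
    refine ⟨aux _ _ (hc i hi) h1, ?_⟩
    rw [hc i hi]
    exact aux _ _ (hc i hi).symm h1.symm
  have hm2 : ∀ i < n, ∀ j < n, g j ∈ Subgroup.zpowers (g i * g (sc n i)) →
      j = i ∨ j = sc n i := by
    intro i hi j hj hmem
    obtain ⟨ha, hb⟩ := hm1 i hi
    have : orderOf (g j) = orderOf (g i) ∨ orderOf (g j) = orderOf (g (sc n i)) := by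
      rcases ho i hi with h | h <;> rcases hpr j hj with h' | h' <;> rw [h.1, h.2, h'] <;> simp
    rcases this with h | h
    · left
      exact hinj j hj i hi (mem_of_dvd hmem ha h.dvd) (mem_of_dvd ha hmem h.symm.dvd)
    · right
      exact hinj j hj _ (hs i hi) (mem_of_dvd hmem hb h.dvd) (mem_of_dvd hb hmem h.symm.dvd)
  have hm3 : ∀ i < n, ∀ j < n, g i * g (sc n i) ∉ Subgroup.zpowers (g j) := by
    intro i hi j hj hmem
    have h := orderOf_dvd_of_mem_zpowers hmem
    rw [hoh i hi] at h
    rcases hpr j hj with h' | h' <;> rw [h'] at h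
    · exact hpq ((Nat.prime_dvd_prime_iff_eq hq hp).1 ((dvd_mul_left q p).trans h)).symm
    · exact hpq ((Nat.prime_dvd_prime_iff_eq hp hq).1 ((dvd_mul_right p q).trans h))
  have hm4 : ∀ i < n, ∀ j < n,
      g i * g (sc n i) ∈ Subgroup.zpowers (g j * g (sc n j)) → i = j := by
    intro i hi j hj hmem
    obtain ⟨ha, hb⟩ := hm1 i hi
    have h1 := hm2 j hj i hi ((Subgroup.zpowers_le.2 hmem) ha)
    have h2 := hm2 j hj _ (hs i hi) ((Subgroup.zpowers_le.2 hmem) hb)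
    have hsc : ∀ k, (k + 1 = n ∧ sc n k = 0) ∨ (k + 1 ≠ n ∧ sc n k = k + 1) := by
      intro k; unfold sc; split_ifs <;> omega
    have a1 := hsc i
    have a2 := hsc j
    omega
  have hm5 : ∀ i < n, ∀ j < n, g i ∈ Subgroup.zpowers (g j) → i = j := by
    intro i hi j hj hmem
    have h := orderOf_dvd_of_mem_zpowers hmem
    have he : orderOf (g i) = orderOf (g j) := by
      have pp : ∀ k < n, (orderOf (g k)).Prime := by
        intro k hk; rcases hpr k hk with h | h <;> rw [h] <;> assumption
      exact (Nat.prime_dvd_prime_iff_eq (pp i hi) (pp j hj)).1 h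
    exact hinj i hi j hj hmem (mem_of_dvd (Subgroup.mem_zpowers _) hmem he.symm.dvd)
  refine cyc_false hch (2 * n) (by omega)
    (fun k => if k % 2 = 0 then g (k / 2) else g (k / 2) * g (sc n (k / 2))) ?_
  intro k l hkl hl
  have hk2 : k / 2 < n := by omega
  have hl2 : l / 2 < n := by omega
  have neq : ∀ x y : G, (x ∈ Subgroup.zpowers y → False) → x ≠ y := by
    rintro x y h rfl
    exact h (Subgroup.mem_zpowers _)
  simp only [pg_adj]
  split_ifs with h1 h2 h2
  · have e1 : g (k / 2) ∉ Subgroup.zpowers (g (l / 2)) := fun h => by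
      have := hm5 _ hk2 _ hl2 h; omega
    have e2 : g (l / 2) ∉ Subgroup.zpowers (g (k / 2)) := fun h => by
      have := hm5 _ hl2 _ hk2 h; omega
    refine ⟨neq _ _ e1, ?_⟩
    simp only [e1, e2, or_self, and_false, false_iff]
    omega
  · have e2 := hm3 _ hl2 _ hk2
    refine ⟨(neq _ _ e2).symm, ?_⟩
    simp only [e2, or_false, (neq _ _ e2).symm, ne_eq, not_false_eq_true, true_and]
    constructor
    · intro h
      have := hm2 _ hl2 _ hk2 h
      unfold sc at this
      split_ifs at this <;> omega
    · intro h
      have : k / 2 = l / 2 ∨ k / 2 = sc n (l / 2) := by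
        unfold sc
        split_ifs <;> omega
      rcases this with h | h
      · rw [h]; exact (hm1 _ hl2).1
      · rw [h]; exact (hm1 _ hl2).2
  · have e2 := hm3 _ hk2 _ hl2
    refine ⟨(neq _ _ e2), ?_⟩
    simp only [e2, false_or, (neq _ _ e2), ne_eq, not_false_eq_true, true_and]
    constructor
    · intro h
      have := hm2 _ hk2 _ hl2 h
      unfold sc at this
      split_ifs at this <;> omega
    · intro h
      have : l / 2 = k / 2 ∨ l / 2 = sc n (k / 2) := by
        unfold sc
        split_ifs <;> omega
      rcases this with h | h
      · rw [h]; exact (hm1 _ hk2).1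
      · rw [h]; exact (hm1 _ hk2).2
  · have e1 : g (k / 2) * g (sc n (k / 2)) ∉ Subgroup.zpowers (g (l / 2) * g (sc n (l / 2))) :=
      fun h => by
        have := hm4 _ hk2 _ hl2 h; omega
    have e2 : g (l / 2) * g (sc n (l / 2)) ∉ Subgroup.zpowers (g (k / 2) * g (sc n (k / 2))) :=
      fun h => by
        have := hm4 _ hl2 _ hk2 h; omega
    refine ⟨neq _ _ e1, ?_⟩
    simp only [e1, e2, or_self, and_false, false_iff]
    omega

lemma B_acyclic {G : Type*} [Group G] [Finite G] {p q : ℕ} (hp : p.Prime) (hq : q.Prime)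
    (hpq : p ≠ q) (hch : IsChordal (powerGraph G)) : (B G p q hpq).IsAcyclic := by
  rw [SimpleGraph.isAcyclic_iff_free_cycleGraph]
  rintro n hn ⟨c⟩
  have hs : ∀ i < n, sc n i < n := by intro i hi; unfold sc; split_ifs <;> omega
  have hadj : ∀ i (hi : i < n), (B G p q hpq).Adj (c ⟨i, hi⟩) (c ⟨sc n i, hs i hi⟩) := by
    intro i hi
    apply c.toHom.map_adj
    rw [SimpleGraph.cycleGraph_adj', Fin.sub_def, Fin.sub_def]
    right
    simp only
    unfold sc
    split_ifs
    · rw [Nat.mod_eq_of_lt] <;> omega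
    · rw [show n - i + (i + 1) = 1 + n by omega, Nat.add_mod_right, Nat.mod_eq_of_lt (by omega)]
  have hg : ∀ i : Fin n, ∃ g, c i = Subgroup.zpowers g ∧ orderOf g = Nat.card (c i) := by
    intro i
    have h := (hadj i.1 i.2).1
    have : (Nat.card (c i)).Prime := by
      rcases h with h | h
      · rw [h.1]; exact hp
      · rw [h.1]; exact hq
    exact exists_gen this rfl
  choose g hg1 hg2 using hg
  refine cycle_elems hp hq hpq hch n hn (fun i => if h : i < n then g ⟨i, h⟩ else 1) ?_ ?_ ?_
  · intro i hi
    simp only [hi, hs i hi, dif_pos, hg2]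
    exact (hadj i hi).1
  · intro i hi
    simp only [hi, hs i hi, dif_pos]
    apply (hadj i hi).2
    · rw [hg1]; exact Subgroup.mem_zpowers _
    · rw [hg1]; exact Subgroup.mem_zpowers _
  · intro i hi j hj h1 h2
    simp only [hi, hj, dif_pos] at h1 h2
    have : c ⟨i, hi⟩ = c ⟨j, hj⟩ := by
      rw [hg1, hg1]
      exact le_antisymm (Subgroup.zpowers_le.2 h1) (Subgroup.zpowers_le.2 h2)
    have := c.injective this
    simpa using this

section tree
variable {V : Type*} {T : SimpleGraph V}

lemma step_toward {x y : V} (h : T.Reachable x y) (hne : x ≠ y) :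
    ∃ z, T.Adj x z ∧ T.Reachable z y ∧ T.dist x y = T.dist z y + 1 := by
  obtain ⟨w, hw⟩ := h.exists_walk_length_eq_dist
  cases w with
  | nil => exact absurd rfl hne
  | cons hadj w' =>
    refine ⟨_, hadj, w'.reachable, ?_⟩
    have h1 := T.dist_le w'
    simp only [SimpleGraph.Walk.length_cons] at hw
    have h2 := hadj.reachable.dist_triangle_left y
    rw [SimpleGraph.dist_eq_one_iff_adj.2 hadj] at h2
    omega

lemma closer_unique (hT : T.IsAcyclic) {v a b w : V} (ha : T.Adj v a) (hb : T.Adj v b)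
    (hr : T.Reachable v w) (h1 : T.dist a w < T.dist v w) (h2 : T.dist b w < T.dist v w) :
    a = b := by
  have hra : T.Reachable a w := ha.symm.reachable.trans hr
  have hrb : T.Reachable b w := hb.symm.reachable.trans hr
  obtain ⟨pa, hpa⟩ := hra.exists_walk_length_eq_dist
  obtain ⟨pb, hpb⟩ := hrb.exists_walk_length_eq_dist
  have ea := T.dist_le (SimpleGraph.Walk.cons ha pa)
  have eb := T.dist_le (SimpleGraph.Walk.cons hb pb)
  have ia := (SimpleGraph.Walk.cons ha pa).isPath_of_length_eq_dist (by
    simp only [SimpleGraph.Walk.length_cons] at *; omega)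
  have ib := (SimpleGraph.Walk.cons hb pb).isPath_of_length_eq_dist (by
    simp only [SimpleGraph.Walk.length_cons] at *; omega)
  have := hT.path_unique ⟨_, ia⟩ ⟨_, ib⟩
  have h3 := congrArg (fun t : T.Path v w => t.1.snd) this
  simpa using h3

lemma farther (hT : T.IsAcyclic) {v a b w : V} (ha : T.Adj v a) (hb : T.Adj v b)
    (hab : a ≠ b) (hr : T.Reachable v w) (h1 : T.dist a w < T.dist v w) :
    T.dist b w = T.dist v w + 1 := by
  have h := hT.dist_eq_dist_add_one_of_adj_of_reachable w hb hr.symm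
  rw [T.dist_comm (u := w), T.dist_comm (u := w)] at h
  rcases h with h | h
  · exact absurd (closer_unique hT ha hb hr h1 (by omega)) hab
  · exact h

lemma go_away (hT : T.IsAcyclic) {w y : V} : ∀ (n : ℕ) (x z : V), T.Adj x z → T.Reachable z y →
    T.Reachable z w →
    T.dist z y = n → T.dist x y = n + 1 → T.dist z w = T.dist x w + 1 →
    T.dist y w = T.dist z w + n := by
  intro n
  induction n with
  | zero =>
    intro x z hxz hzy hzw h1 h2 h3
    rw [hzy.dist_eq_zero_iff] at h1
    subst h1; rfl
  | succ n ih =>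
    intro x z hxz hzy hzw h1 h2 h3
    have hne : z ≠ y := by rintro rfl; simp at h1
    obtain ⟨z', hz', hr', hd⟩ := step_toward hzy hne
    have hx : x ≠ z' := by rintro rfl; omega
    have h4 := farther hT hxz.symm hz' hx hzw (by omega)
    have h5 := ih z z' hz' hr' (hz'.symm.reachable.trans hzw) (by omega) (by omega) h4
    omega

open Classical in
/-- eccentricity -/
noncomputable def ecc [Fintype V] (T : SimpleGraph V) (v : V) : ℕ :=
  Finset.univ.sup (fun w => T.dist v w)

lemma le_ecc [Fintype V] (v w : V) : T.dist v w ≤ ecc T v :=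
  Finset.le_sup (f := fun w => T.dist v w) (Finset.mem_univ w)

lemma ecc_attained [Fintype V] (v : V) : ∃ w, T.dist v w = ecc T v := by
  obtain ⟨w, -, hw⟩ := Finset.exists_mem_eq_sup (Finset.univ : Finset V) ⟨v, Finset.mem_univ v⟩
    (fun w => T.dist v w)
  exact ⟨w, hw.symm⟩

lemma better [Fintype V] (hT : T.IsAcyclic) {x y : V} (hr : T.Reachable x y) (hne : x ≠ y)
    (hna : ¬ T.Adj x y) : ∃ z, T.Reachable x z ∧ ecc T z < max (ecc T x) (ecc T y) := by
  obtain ⟨z, hz, hzr, hd⟩ := step_toward hr hne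
  have h2 := hr.one_lt_dist_of_ne_of_not_adj hne hna
  refine ⟨z, hz.reachable, ?_⟩
  obtain ⟨w, hw⟩ := ecc_attained (T := T) z
  rw [← hw]
  have l1 := le_ecc (T := T) x w
  have l2 := le_ecc (T := T) y w
  have l3 := le_ecc (T := T) x y
  by_cases hzw : T.Reachable z w
  · have h := hT.dist_eq_dist_add_one_of_adj_of_reachable w hz.symm hzw.symm
    rw [T.dist_comm (u := w), T.dist_comm (u := w)] at h
    rcases h with h | h
    · have := go_away hT _ x z hz hzr hzw rfl hd h
      rw [lt_max_iff]; right; omega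
    · rw [lt_max_iff]; left; omega
  · rw [SimpleGraph.dist_eq_zero_of_not_reachable hzw, lt_max_iff]; left; omega

lemma reach_iso (f : T ≃g T) {x y : V} : T.Reachable (f x) (f y) ↔ T.Reachable x y :=
  f.reachable_iff

lemma dist_iso (f : T ≃g T) (x y : V) : T.dist (f x) (f y) = T.dist x y := by
  have key : ∀ (f : T ≃g T) (x y : V), T.Reachable x y → T.dist (f x) (f y) ≤ T.dist x y := by
    intro f x y h
    obtain ⟨w, hw⟩ := h.exists_walk_length_eq_dist
    have := T.dist_le (w.map f.toHom)
    rw [SimpleGraph.Walk.length_map, hw] at this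
    exact this
  by_cases h : T.Reachable x y
  · apply le_antisymm (key f x y h)
    have := key f.symm (f x) (f y) ((reach_iso f).2 h)
    simpa using this
  · rw [SimpleGraph.dist_eq_zero_of_not_reachable h,
      SimpleGraph.dist_eq_zero_of_not_reachable (fun h' => h ((reach_iso f).1 h'))]

lemma ecc_iso [Fintype V] (f : T ≃g T) (x : V) : ecc T (f x) = ecc T x := by
  apply le_antisymm
  · obtain ⟨w, hw⟩ := ecc_attained (T := T) (f x)
    rw [← hw, ← f.apply_symm_apply w, dist_iso]
    exact le_ecc _ _
  · obtain ⟨w, hw⟩ := ecc_attained (T := T) x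
    rw [← hw, ← dist_iso f]
    exact le_ecc _ _

/-- a vertex in the component of `x` fixed by all "type preserving" automorphisms fixing some
vertex in the component -/
lemma exists_center [Finite V] (hT : T.IsAcyclic) (x : V) : ∃ v, T.Reachable x v ∧
    ∀ (f : T ≃g T) (y : V), T.Reachable x y → f y = y → ¬ T.Adj v (f v) → f v = v := by
  have := Fintype.ofFinite V
  have hex : ∃ n, ∃ v, T.Reachable x v ∧ ecc T v = n := ⟨_, x, SimpleGraph.Reachable.refl x, rfl⟩
  classical
  obtain ⟨v, hv, hn⟩ := Nat.find_spec hex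
  refine ⟨v, hv, ?_⟩
  intro f y hy hfy hna
  by_contra hne
  have hvy : T.Reachable v y := hv.symm.trans hy
  have h1 : T.Reachable (f v) y := by
    have := (reach_iso f).2 hvy
    rwa [hfy] at this
  obtain ⟨z, hz, hlt⟩ := better hT (hvy.trans h1.symm) (Ne.symm hne) hna
  rw [ecc_iso, max_self, hn] at hlt
  exact Nat.find_min hex hlt ⟨z, hv.trans hz, rfl⟩

lemma dist_seq (hT : T.IsAcyclic) (X : ℕ → V) (N : ℕ) (hadj : ∀ i < N, T.Adj (X i) (X (i + 1)))
    (hnb : ∀ i, i + 2 ≤ N → X i ≠ X (i + 2)) :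
    ∀ i ≤ N, T.Reachable (X i) (X 0) ∧ T.dist (X i) (X 0) = i := by
  have key : ∀ i, i + 1 ≤ N → (T.Reachable (X i) (X 0) ∧ T.dist (X i) (X 0) = i) ∧
      (T.Reachable (X (i + 1)) (X 0) ∧ T.dist (X (i + 1)) (X 0) = i + 1) := by
    intro i
    induction i with
    | zero =>
      intro h
      have := (hadj 0 (by omega)).symm
      exact ⟨⟨SimpleGraph.Reachable.refl _, by simp⟩, this.reachable,
        SimpleGraph.dist_eq_one_iff_adj.2 this⟩
    | succ i ih =>
      intro h
      obtain ⟨⟨a1, a2⟩, b1, b2⟩ := ih (by omega)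
      have h1 := (hadj i (by omega)).symm
      have h2 := hadj (i + 1) (by omega)
      refine ⟨⟨b1, b2⟩, h2.symm.reachable.trans b1, ?_⟩
      rw [farther hT h1 h2 (hnb i (by omega)) b1 (by omega), b2]
  intro i hi
  cases i with
  | zero => exact ⟨SimpleGraph.Reachable.refl _, by simp⟩
  | succ i => exact (key i hi).2

end tree

lemma map_conj_card {G : Type*} [Group G] (g : G) (X : Subgroup G) :
    Nat.card ((MulAut.conj g).mapSubgroup X : Subgroup G) = Nat.card X :=
  (Nat.card_congr (X.equivMapOfInjective _ (MulAut.conj g).injective).toEquiv).symm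

lemma mem_map_conj {G : Type*} [Group G] (g : G) (X : Subgroup G) (y : G) :
    y ∈ (MulAut.conj g).mapSubgroup X ↔ ∃ x ∈ X, g * x * g⁻¹ = y := by
  exact Iff.rfl

/-- conjugation as a graph automorphism -/
def conjIso {G : Type*} [Group G] {p q : ℕ} {hpq : p ≠ q} (g : G) : B G p q hpq ≃g B G p q hpq where
  toEquiv := (MulAut.conj g).mapSubgroup.toEquiv
  map_rel_iff' := by
    intro X Y
    change (B G p q hpq).Adj ((MulAut.conj g).mapSubgroup X) ((MulAut.conj g).mapSubgroup Y) ↔ _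
    simp only [B, map_conj_card]
    simp only [mem_map_conj]
    refine and_congr_right fun _ => ?_
    constructor
    · intro h x hx y hy
      have := h _ ⟨x, hx, rfl⟩ _ ⟨y, hy, rfl⟩
      have h2 : g * (x * y) * g⁻¹ = g * (y * x) * g⁻¹ := by
        calc g * (x * y) * g⁻¹ = g * x * g⁻¹ * (g * y * g⁻¹) := by group
          _ = g * y * g⁻¹ * (g * x * g⁻¹) := this
          _ = _ := by group
      simpa using h2
    · rintro h _ ⟨x, hx, rfl⟩ _ ⟨y, hy, rfl⟩
      calc g * x * g⁻¹ * (g * y * g⁻¹) = g * (x * y) * g⁻¹ := by group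
          _ = g * (y * x) * g⁻¹ := by rw [h x hx y hy]
          _ = _ := by group

lemma mem_conjIso {G : Type*} [Group G] {p q : ℕ} {hpq : p ≠ q} (g : G) (X : Subgroup G) (y : G) :
    y ∈ (conjIso (hpq := hpq) g) X ↔ ∃ x ∈ X, g * x * g⁻¹ = y := Iff.rfl

lemma card_conjIso {G : Type*} [Group G] {p q : ℕ} {hpq : p ≠ q} (g : G) (X : Subgroup G) :
    Nat.card (conjIso (hpq := hpq) g X : Subgroup G) = Nat.card X := map_conj_card g X

lemma conjIso_self {G : Type*} [Group G] {p q : ℕ} {hpq : p ≠ q} {g : G} {X : Subgroup G}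
    (h : g ∈ X) : conjIso (hpq := hpq) g X = X := by
  ext y
  rw [mem_conjIso]
  constructor
  · rintro ⟨x, hx, rfl⟩
    exact mul_mem (mul_mem h hx) (inv_mem h)
  · intro hy
    exact ⟨g⁻¹ * y * g, mul_mem (mul_mem (inv_mem h) hy) h, by group⟩

lemma fin_aux {G : Type*} [Group G] [Finite G] {p q : ℕ} (hp : p.Prime) (hq : q.Prime)
    (hpq : p ≠ q) (hT : (B G p q hpq).IsAcyclic) {v s o : Subgroup G}
    (hv : ∀ g : G, g ∈ s ∨ g ∈ o → conjIso (hpq := hpq) g v = v)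
    (hso : (B G p q hpq).Adj s o) (hs : 3 ≤ (B G p q hpq).dist v s)
    (ho : 3 ≤ (B G p q hpq).dist v o) (hcard : Nat.card v = Nat.card s) : False := by
  have hr : (B G p q hpq).Reachable v s := SimpleGraph.Reachable.of_dist_ne_zero (by omega)
  have hne : v ≠ s := by rintro rfl; simp at hs
  obtain ⟨y, hy, hyr, hd⟩ := step_toward hr hne
  have hys : ¬ (B G p q hpq).Adj s y := fun h => by
    have := SimpleGraph.dist_eq_one_iff_adj.2 h.symm; omega
  have hov : ¬ (B G p q hpq).Adj o v := fun h => by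
    have := SimpleGraph.dist_eq_one_iff_adj.2 h.symm; omega
  have hspr : (Nat.card s).Prime := by
    rcases hso.1 with h | h <;> rw [h.1] <;> assumption
  have hopr : (Nat.card o).Prime := by
    rcases hso.1 with h | h <;> rw [h.2] <;> assumption
  have e1 := hso.1
  have e2 := hy.1
  have norm : ∀ (g : G) (X : Subgroup G), conjIso (hpq := hpq) g X = X → ∀ y ∈ X, g * y * g⁻¹ ∈ X := by
    intro g X h y hy
    have : g * y * g⁻¹ ∈ conjIso (hpq := hpq) g X := ⟨y, hy, rfl⟩
    rwa [h] at this
  have l1 : Nat.card o < Nat.card v := by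
    apply lt_of_norm hopr rfl rfl
    · intro x hx
      exact norm x v (hv x (Or.inr hx))
    · intro h
      exact hov ⟨by omega, h⟩
  have l2 : Nat.card s < Nat.card y := by
    apply lt_of_norm hspr rfl rfl
    · intro x hx
      apply norm x y
      have a1 := hv x (Or.inl hx)
      have a2 : (B G p q hpq).Adj v (conjIso (hpq := hpq) x y) := by
        have := (conjIso (hpq := hpq) x).map_rel_iff.2 hy
        rwa [a1] at this
      have a3 := dist_iso (conjIso (hpq := hpq) x) y s
      rw [conjIso_self hx] at a3
      exact closer_unique hT a2 hy hr (by omega) (by omega)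
    · intro h
      exact hys ⟨by omega, h⟩
  omega

lemma fin_aux2 {G : Type*} [Group G] [Finite G] {p q : ℕ} (hp : p.Prime) (hq : q.Prime)
    (hpq : p ≠ q) (hT : (B G p q hpq).IsAcyclic) {v s o : Subgroup G}
    (hv : ∀ g : G, g ∈ s ∨ g ∈ o → conjIso (hpq := hpq) g v = v)
    (hso : (B G p q hpq).Adj s o) (hs : 4 ≤ (B G p q hpq).dist v s) : False := by
  have hr : (B G p q hpq).Reachable v s := SimpleGraph.Reachable.of_dist_ne_zero (by omega)
  have hne : v ≠ s := by rintro rfl; simp at hs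
  obtain ⟨y, hy, hyr, hd⟩ := step_toward hr hne
  have h1 := hT.dist_eq_dist_add_one_of_adj_of_reachable v hso hr
  have e1 := hso.1
  have e2 := hy.1
  have : Nat.card v = Nat.card s ∨ Nat.card v = Nat.card o := by omega
  rcases this with h | h
  · exact fin_aux hp hq hpq hT hv hso (by omega) (by omega) h
  · exact fin_aux hp hq hpq hT (fun g hg => hv g hg.symm) hso.symm (by omega) (by omega) h

lemma no_long {G : Type*} [Group G] [Finite G] {p q : ℕ} (hp : p.Prime) (hq : q.Prime)
    (hpq : p ≠ q) (hT : (B G p q hpq).IsAcyclic) (X : ℕ → Subgroup G)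
    (hadj : ∀ i < 7, (B G p q hpq).Adj (X i) (X (i + 1)))
    (hnb : ∀ i, i + 2 ≤ 7 → X i ≠ X (i + 2)) : False := by
  have hd := dist_seq hT X 7 hadj hnb
  obtain ⟨v, hv, hfix⟩ := exists_center hT (X 0)
  have hfix' : ∀ i ≤ 7, ∀ g ∈ X i, conjIso (hpq := hpq) g v = v := by
    intro i hi g hg
    refine hfix _ (X i) (hd i hi).1.symm (conjIso_self hg) ?_
    intro h
    have := h.1
    rw [card_conjIso] at this
    omega
  have h7 := (hd 7 le_rfl)
  have tri := (h7.1.trans hv).dist_triangle_left (X 0)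
  rw [h7.2, SimpleGraph.dist_comm] at tri
  rcases (by omega : 4 ≤ (B G p q hpq).dist v (X 7) ∨ 4 ≤ (B G p q hpq).dist v (X 0)) with h | h
  · refine fin_aux2 hp hq hpq hT (s := X 7) (o := X 6) ?_ (hadj 6 (by omega)).symm h
    rintro g (hg | hg)
    · exact hfix' 7 (by omega) g hg
    · exact hfix' 6 (by omega) g hg
  · refine fin_aux2 hp hq hpq hT (s := X 0) (o := X 1) ?_ (hadj 0 (by omega)) h
    rintro g (hg | hg)
    · exact hfix' 0 (by omega) g hg
    · exact hfix' 1 (by omega) g hg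

lemma exists_prime_elem {G : Type*} [Group G] [Finite G] {r : ℕ} {d : G}
    (h : r ∣ orderOf d) (hr : r.Prime) : ∃ x ∈ Subgroup.zpowers d, orderOf x = r := by
  refine ⟨d ^ (orderOf d / r), Subgroup.pow_mem _ (Subgroup.mem_zpowers _) _, ?_⟩
  exact orderOf_pow_orderOf_div (orderOf_pos d).ne' h

/-- if `d` is not divisible by `q`, then an element of the same cyclic group incomparable
with `d` has order divisible by `q` -/
lemma other_dvd {G : Type*} [Group G] [Finite G] {p q a b : ℕ} (hp : p.Prime) (hq : q.Prime)
    (hcard : Nat.card G = p ^ a * q ^ b) {u d e : G}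
    (hd : d ∈ Subgroup.zpowers u) (he : e ∈ Subgroup.zpowers u)
    (h1 : d ∉ Subgroup.zpowers e) (h2 : e ∉ Subgroup.zpowers d)
    (hqd : ¬ q ∣ orderOf d) : q ∣ orderOf e := by
  by_contra hqe
  have key : ∀ x : G, ¬ q ∣ orderOf x → ∃ k, orderOf x = p ^ k := by
    intro x hx
    have h : orderOf x ∣ p ^ a * q ^ b := hcard ▸ orderOf_dvd_natCard x
    have hc : Nat.Coprime (orderOf x) (q ^ b) :=
      (((Nat.Prime.coprime_iff_not_dvd hq).2 hx).symm).pow_right b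
    obtain ⟨k, -, hk⟩ := (Nat.dvd_prime_pow hp).1 (hc.dvd_of_dvd_mul_right h)
    exact ⟨k, hk⟩
  obtain ⟨k, hk⟩ := key d hqd
  obtain ⟨l, hl⟩ := key e hqe
  rcases le_total k l with h | h
  · exact h1 (mem_of_dvd hd he (by rw [hk, hl]; exact pow_dvd_pow p h))
  · exact h2 (mem_of_dvd he hd (by rw [hk, hl]; exact pow_dvd_pow p h))

lemma main_aux {G : Type*} [Group G] [Finite G] {p q a b : ℕ} (hp : p.Prime) (hq : q.Prime)
    (hpq : p ≠ q) (hcard : Nat.card G = p ^ a * q ^ b) (hch : IsChordal (powerGraph G))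
    (d u : ℕ → G)
    (hdu : ∀ i < 7, d i ∈ Subgroup.zpowers (u i) ∧ d (i + 1) ∈ Subgroup.zpowers (u i))
    (hd : ∀ i < 7, d i ∉ Subgroup.zpowers (d (i + 1)) ∧ d (i + 1) ∉ Subgroup.zpowers (d i))
    (hu : ∀ i < 6, u i ∉ Subgroup.zpowers (u (i + 1)) ∧ u (i + 1) ∉ Subgroup.zpowers (u i))
    (h1 : p ∣ orderOf (d 1)) : False := by
  have hcard' : Nat.card G = q ^ b * p ^ a := by rw [hcard, mul_comm]
  have nb : ∀ i < 6, p ∣ orderOf (d (i + 1)) → q ∣ orderOf (d (i + 1)) → False := by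
    intro i hi hpd hqd
    obtain ⟨x, hx, hxo⟩ := exists_prime_elem hpd hp
    obtain ⟨y, hy, hyo⟩ := exists_prime_elem hqd hq
    have i1 := Subgroup.zpowers_le.2 (hdu i (by omega)).2
    have i2 := Subgroup.zpowers_le.2 (hdu (i + 1) (by omega)).1
    exact no_share hp hq hpq hch (hu i hi).1 (hu i hi).2 hxo hyo (i1 hx) (i2 hx) (i1 hy) (i2 hy)
  let r : ℕ → ℕ := fun i => if i % 2 = 0 then q else p
  have hrp : ∀ i, (r i).Prime := by
    intro i; simp only [r]; split_ifs <;> assumption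
  have hr : ∀ i, i < 7 → r (i + 1) ∣ orderOf (d (i + 1)) := by
    intro i
    induction i with
    | zero => intro _; simpa [r] using h1
    | succ i ih =>
      intro hi
      have h := ih (by omega)
      have hdi := hd (i + 1) (by omega)
      have hdui := hdu (i + 1) (by omega)
      have hn := nb i (by omega)
      by_cases hpar : i % 2 = 0
      · have e1 : r (i + 1) = p := by simp only [r]; rw [if_neg (by omega)]
        have e2 : r (i + 1 + 1) = q := by simp only [r]; rw [if_pos (by omega)]
        rw [e1] at h
        rw [e2]
        exact other_dvd hp hq hcard hdui.1 hdui.2 hdi.1 hdi.2 (hn h)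
      · have e1 : r (i + 1) = q := by simp only [r]; rw [if_pos (by omega)]
        have e2 : r (i + 1 + 1) = p := by simp only [r]; rw [if_neg (by omega)]
        rw [e1] at h
        rw [e2]
        exact other_dvd hq hp hcard' hdui.1 hdui.2 hdi.1 hdi.2 (fun h' => hn h' h)
  have hr0 : ∀ i, i < 8 → r i ∣ orderOf (d i) := by
    intro i hi
    cases i with
    | succ i => exact hr i (by omega)
    | zero =>
      have e : r 0 = q := by simp [r]
      rw [e]
      have hdi := hd 0 (by omega)
      have hdui := hdu 0 (by omega)
      exact other_dvd hp hq hcard hdui.2 hdui.1 hdi.2 hdi.1 (nb 0 (by omega) h1)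
  have hx : ∀ i, ∃ x, i < 8 → x ∈ Subgroup.zpowers (d i) ∧ orderOf x = r i := by
    intro i
    by_cases hi : i < 8
    · obtain ⟨x, hx⟩ := exists_prime_elem (hr0 i hi) (hrp i)
      exact ⟨x, fun _ => hx⟩
    · exact ⟨1, fun h => absurd h hi⟩
  choose x hx using hx
  have hxu : ∀ i < 7, x i ∈ Subgroup.zpowers (u i) ∧ x (i + 1) ∈ Subgroup.zpowers (u i) := by
    intro i hi
    exact ⟨Subgroup.zpowers_le.2 (hdu i hi).1 (hx i (by omega)).1,
      Subgroup.zpowers_le.2 (hdu i hi).2 (hx (i + 1) (by omega)).1⟩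
  have hralt : ∀ i, (r i = p ∧ r (i + 1) = q) ∨ (r i = q ∧ r (i + 1) = p) := by
    intro i
    simp only [r]
    by_cases hpar : i % 2 = 0
    · right; rw [if_pos hpar, if_neg (by omega)]; exact ⟨rfl, rfl⟩
    · left; rw [if_neg hpar, if_pos (by omega)]; exact ⟨rfl, rfl⟩
  refine no_long hp hq hpq (B_acyclic hp hq hpq hch) (fun i => Subgroup.zpowers (x i)) ?_ ?_
  · intro i hi
    refine ⟨?_, ?_⟩
    · rw [Nat.card_zpowers, Nat.card_zpowers, (hx i (by omega)).2, (hx (i + 1) (by omega)).2]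
      exact hralt i
    · intro y hy z hz
      have hy' := Subgroup.zpowers_le.2 (hxu i hi).1 hy
      have hz' := Subgroup.zpowers_le.2 (hxu i hi).2 hz
      obtain ⟨k, rfl⟩ := Subgroup.mem_zpowers_iff.1 hy'
      obtain ⟨l, rfl⟩ := Subgroup.mem_zpowers_iff.1 hz'
      exact ((Commute.refl (u i)).zpow_zpow k l)
  · intro i hi heq
    have hmem : x i ∈ Subgroup.zpowers (x (i + 2)) := by
      have : x i ∈ Subgroup.zpowers (x i) := Subgroup.mem_zpowers _
      rwa [show Subgroup.zpowers (x i) = Subgroup.zpowers (x (i + 2)) from heq] at this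
    have hmem' : x i ∈ Subgroup.zpowers (u (i + 1)) :=
      Subgroup.zpowers_le.2 (hxu (i + 1) (by omega)).2 hmem
    have hui := hu i (by omega)
    have o1 := (hx i (by omega)).2
    have o2 := (hx (i + 1) (by omega)).2
    rcases hralt i with ⟨h, h'⟩ | ⟨h, h'⟩
    · exact no_share hp hq hpq hch hui.1 hui.2 (o1.trans h) (o2.trans h')
        (hxu i (by omega)).1 hmem' (hxu i (by omega)).2 (hxu (i + 1) (by omega)).1
    · exact no_share hq hp hpq.symm hch hui.1 hui.2 (o1.trans h) (o2.trans h')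
        (hxu i (by omega)).1 hmem' (hxu i (by omega)).2 (hxu (i + 1) (by omega)).1

lemma main_aux2 {G : Type*} [Group G] [Finite G] {p q a b : ℕ} (hp : p.Prime) (hq : q.Prime)
    (hpq : p ≠ q) (hcard : Nat.card G = p ^ a * q ^ b) (hch : IsChordal (powerGraph G))
    (d u : ℕ → G)
    (hdu : ∀ i < 7, d i ∈ Subgroup.zpowers (u i) ∧ d (i + 1) ∈ Subgroup.zpowers (u i))
    (hd : ∀ i < 7, d i ∉ Subgroup.zpowers (d (i + 1)) ∧ d (i + 1) ∉ Subgroup.zpowers (d i))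
    (hu : ∀ i < 6, u i ∉ Subgroup.zpowers (u (i + 1)) ∧ u (i + 1) ∉ Subgroup.zpowers (u i)) :
    False := by
  by_cases h1 : p ∣ orderOf (d 1)
  · exact main_aux hp hq hpq hcard hch d u hdu hd hu h1
  · have hcard' : Nat.card G = q ^ b * p ^ a := by rw [hcard, mul_comm]
    refine main_aux hq hp hpq.symm hcard' hch d u hdu hd hu ?_
    by_contra h2
    have h : orderOf (d 1) ∣ p ^ a * q ^ b := hcard ▸ orderOf_dvd_natCard (d 1)
    have c1 : Nat.Coprime (orderOf (d 1)) (p ^ a) :=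
      (((Nat.Prime.coprime_iff_not_dvd hp).2 h1).symm).pow_right a
    have c2 : Nat.Coprime (orderOf (d 1)) (q ^ b) :=
      (((Nat.Prime.coprime_iff_not_dvd hq).2 h2).symm).pow_right b
    have h3 := Nat.Coprime.eq_one_of_dvd (c1.mul_right c2) h
    rw [orderOf_eq_one_iff] at h3
    apply (hd 0 (by omega)).2
    rw [zero_add, h3]
    exact one_mem _

lemma path_aux {G : Type*} [Group G] (x : ℕ → G) (N : ℕ)
    (hx : ∀ i j, i < j → j < N → x i ≠ x j ∧
      ((powerGraph G).Adj (x i) (x j) ↔ j = i + 1)) :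
    (∀ i j, i + 2 ≤ j → j < N → x i ∉ Subgroup.zpowers (x j) ∧ x j ∉ Subgroup.zpowers (x i)) ∧
    (∀ i, i + 2 < N → x i ∈ Subgroup.zpowers (x (i + 1)) →
      x (i + 2) ∈ Subgroup.zpowers (x (i + 1))) ∧
    (∀ i, i + 2 < N → x (i + 1) ∈ Subgroup.zpowers (x i) →
      x (i + 1) ∈ Subgroup.zpowers (x (i + 2))) := by
  have h1 : ∀ i j, i + 2 ≤ j → j < N →
      x i ∉ Subgroup.zpowers (x j) ∧ x j ∉ Subgroup.zpowers (x i) := by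
    intro i j hij hj
    obtain ⟨hne, hadj⟩ := hx i j (by omega) hj
    have : ¬ (powerGraph G).Adj (x i) (x j) := fun h => by
      have := hadj.1 h; omega
    rw [pg_adj] at this
    tauto
  refine ⟨h1, ?_, ?_⟩
  · intro i hi h
    have h2 := (hx (i + 1) (i + 2) (by omega) hi).2.2 rfl
    rw [pg_adj] at h2
    rcases h2.2 with h3 | h3
    · exact absurd (Subgroup.zpowers_le.2 h3 h) (h1 i (i + 2) le_rfl hi).1
    · exact h3
  · intro i hi h
    have h2 := (hx (i + 1) (i + 2) (by omega) hi).2.2 rfl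
    rw [pg_adj] at h2
    rcases h2.2 with h3 | h3
    · exact h3
    · exact absurd (Subgroup.zpowers_le.2 h h3) (h1 i (i + 2) le_rfl hi).2

lemma path_final {G : Type*} [Group G] [Finite G] {p q a b : ℕ} (hp : p.Prime) (hq : q.Prime)
    (hpq : p ≠ q) (hcard : Nat.card G = p ^ a * q ^ b) (hch : IsChordal (powerGraph G))
    (x : ℕ → G)
    (hx : ∀ i j, i < j → j < 16 → x i ≠ x j ∧
      ((powerGraph G).Adj (x i) (x j) ↔ j = i + 1)) : False := by
  obtain ⟨h1, h2, h3⟩ := path_aux x 16 hx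
  -- `c` is the parity of the lower elements
  have key : ∀ c, c ≤ 1 → x c ∈ Subgroup.zpowers (x (c + 1)) → False := by
    intro c hc h
    have hall : ∀ i, i < 7 → x (c + 2 * i) ∈ Subgroup.zpowers (x (c + 2 * i + 1)) ∧
        x (c + 2 * (i + 1)) ∈ Subgroup.zpowers (x (c + 2 * i + 1)) := by
      intro i
      induction i with
      | zero => intro _; exact ⟨h, h2 c (by omega) h⟩
      | succ i ih =>
        intro hi
        have a1 := (ih (by omega)).2
        have a2 := h3 (c + 2 * i + 1) (by omega) a1
        have a3 := h2 (c + 2 * i + 2) (by omega) a2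
        exact ⟨a2, a3⟩
    refine main_aux2 hp hq hpq hcard hch (fun i => x (c + 2 * i)) (fun i => x (c + 2 * i + 1))
      hall ?_ ?_
    · intro i hi
      exact h1 _ _ (by omega) (by omega)
    · intro i hi
      exact h1 _ _ (by omega) (by omega)
  have h0 := (hx 0 1 (by omega) (by omega)).2.2 rfl
  rw [pg_adj] at h0
  rcases h0.2 with h | h
  · exact key 0 (by omega) h
  · exact key 1 (by omega) (h3 0 (by omega) h)

end PG

theorem stmt2 (G : Type*) [Group G] [Fintype G]
    (p q : ℕ) (a b : ℕ) (hp : p.Prime) (hq : q.Prime) (hpq : p ≠ q)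
    (hcard : Fintype.card G = p ^ a * q ^ b)
    (hchordal : IsChordal (powerGraph G)) (L : ℕ)
    (hpath : Nonempty (SimpleGraph.pathGraph L ↪g powerGraph G)) :
    L ≤ 15 := by
  obtain ⟨f⟩ := hpath
  by_contra hL
  refine PG.path_final hp hq hpq (by rw [Nat.card_eq_fintype_card]; exact hcard) hchordal
    (fun i => if h : i < L then f ⟨i, h⟩ else 1) ?_
  intro i j hij hj
  have hi' : i < L := by omega
  have hj' : j < L := by omega
  simp only [hi', hj', dif_pos]
  constructor
  · intro h
    have := f.injective h
    simp at this
    omega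
  · rw [f.map_adj_iff, SimpleGraph.pathGraph_adj]
    simp only
    omega
end

section
/- The power graph of the symmetric group Sym(n) (the group of permutations of an n-element set) is chordal if and only if n ≤ 5. -/
theorem pg_adj {G : Type*} [Group G] (x y : G) : (powerGraph G).Adj x y ↔
    x ≠ y ∧ (x ∈ Subgroup.zpowers y ∨ y ∈ Subgroup.zpowers x) := by
  simp [powerGraph, SimpleGraph.fromRel_adj]

theorem chordal_of_inj {H G : Type*} [Group H] [Group G] (φ : H →* G)
    (hφ : Function.Injective φ) (h : IsChordal (powerGraph G)) : IsChordal (powerGraph H) := by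
  have key : ∀ x y : H, φ x ∈ Subgroup.zpowers (φ y) ↔ x ∈ Subgroup.zpowers y := by
    intro x y
    simp only [Subgroup.mem_zpowers_iff, ← map_zpow, hφ.eq_iff]
  intro n hn
  refine ⟨fun e => (h n hn).false ?_⟩
  exact e.trans ⟨⟨φ, hφ⟩, by
    intro a b
    simp [pg_adj, key, hφ.eq_iff]⟩

theorem chordal_mono {m n : ℕ} (hmn : m ≤ n)
    (h : IsChordal (powerGraph (Equiv.Perm (Fin n)))) :
    IsChordal (powerGraph (Equiv.Perm (Fin m))) :=
  chordal_of_inj (Equiv.Perm.viaEmbeddingHom (Fin.castLEEmb hmn))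
    (Equiv.Perm.viaEmbeddingHom_injective _) h

theorem mem_zp_iff {G : Type*} [Group G] {n : ℕ} (hn : 0 < n) {x y : G} (hy : y ^ n = 1) :
    x ∈ Subgroup.zpowers y ↔ ∃ k : Fin n, y ^ (k : ℕ) = x := by
  constructor
  · rintro ⟨k, rfl⟩
    have hk := Int.emod_nonneg k (b := (n : ℤ)) (by omega)
    have hk' := Int.emod_lt_of_pos k (b := (n : ℤ)) (by omega)
    refine ⟨⟨(k % n).toNat, by omega⟩, ?_⟩
    have : y ^ k = y ^ (k % n) := by
      conv_lhs => rw [← Int.emod_add_mul_ediv k n, zpow_add, zpow_mul, zpow_natCast, hy, one_zpow,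
        mul_one]
    simp only [this]
    rw [← zpow_natCast, Int.toNat_of_nonneg hk]
  · rintro ⟨k, rfl⟩
    exact Subgroup.npow_mem_zpowers y _

/-- the transpositions and 3-cycles -/
def tt (i : Fin 3) : Equiv.Perm (Fin 6) := ![Equiv.swap 0 1, Equiv.swap 0 2, Equiv.swap 0 3] i
def ss (i : Fin 3) : Equiv.Perm (Fin 6) :=
  ![Equiv.swap 3 4 * Equiv.swap 4 5, Equiv.swap 1 4 * Equiv.swap 4 5,
    Equiv.swap 2 4 * Equiv.swap 4 5] i

def cyc : Fin 12 → Equiv.Perm (Fin 6) :=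
  ![tt 0, tt 0 * ss 0, ss 0, ss 0 * tt 1, tt 1, tt 1 * ss 1, ss 1, ss 1 * tt 2,
    tt 2, tt 2 * ss 2, ss 2, ss 2 * tt 0]

theorem cyc_pow : ∀ i, cyc i ^ 6 = 1 := by decide +kernel

theorem cyc_inj : Function.Injective cyc := by
  unfold Function.Injective
  decide +kernel

theorem cyc_adj : ∀ u v : Fin 12,
    (u ≠ v ∧ ((∃ k : Fin 6, cyc v ^ (k : ℕ) = cyc u) ∨ (∃ k : Fin 6, cyc u ^ (k : ℕ) = cyc v)))
      ↔ (u - v = 1 ∨ v - u = 1) := by decide +kernel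

theorem not6 : ¬ IsChordal (powerGraph (Equiv.Perm (Fin 6))) := by
  intro h
  refine (h 12 (by norm_num)).false ⟨⟨cyc, cyc_inj⟩, ?_⟩
  intro u v
  rw [SimpleGraph.cycleGraph_adj, ← cyc_adj, Function.Embedding.coeFn_mk, pg_adj,
    mem_zp_iff (by norm_num) (cyc_pow u), mem_zp_iff (by norm_num) (cyc_pow v), cyc_inj.ne_iff]

theorem ord5 : ∀ b : Equiv.Perm (Fin 5), b ^ 4 = 1 ∨ b ^ 5 = 1 ∨ b ^ 6 = 1 := by decide +kernel

theorem six5 : ∀ b : Equiv.Perm (Fin 5), (b ^ 6 = 1 ∧ b ^ 3 ≠ 1 ∧ b ^ 2 ≠ 1) →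
    ∀ c : Equiv.Perm (Fin 5), (c ^ 6 = 1 ∧ c ^ 3 ≠ 1 ∧ c ^ 2 ≠ 1) → b ^ 3 = c ^ 3 →
      b = c ∨ b = c ^ 5 := by decide +kernel

theorem pow_red {G : Type*} [Group G] {n : ℕ} {b : G} (hb : b ^ n = 1) (i j k : ℕ)
    (h : i * k % n = j % n) : b ^ j ∈ Subgroup.zpowers (b ^ i) := by
  have : b ^ j = (b ^ i) ^ k := by
    rw [← pow_mul, pow_eq_pow_mod (i * k) hb, h, ← pow_eq_pow_mod _ hb]
  rw [this]
  exact Subgroup.npow_mem_zpowers _ _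

def Cmp {G : Type*} [Group G] (x y : G) : Prop :=
  x ∈ Subgroup.zpowers y ∨ y ∈ Subgroup.zpowers x

theorem maxl {a b c : Equiv.Perm (Fin 5)} (ha : a ∈ Subgroup.zpowers b)
    (hc : c ∈ Subgroup.zpowers b) (h : ¬ Cmp a c) :
    (b ^ 6 = 1 ∧ b ^ 3 ≠ 1 ∧ b ^ 2 ≠ 1) ∧
      ((a = b ^ 3 ∧ (c = b ^ 2 ∨ c = b ^ 4)) ∨ (c = b ^ 3 ∧ (a = b ^ 2 ∨ a = b ^ 4))) := by
  have one1 : a ≠ 1 := by rintro rfl; exact h (Or.inl (Subgroup.one_mem _))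
  have one2 : c ≠ 1 := by rintro rfl; exact h (Or.inr (Subgroup.one_mem _))
  rcases ord5 b with hb | hb | hb
  · rw [mem_zp_iff (by norm_num) hb] at ha hc
    obtain ⟨i, rfl⟩ := ha
    obtain ⟨j, rfl⟩ := hc
    exfalso
    have : ∀ i j : Fin 4, (∃ k : Fin 4, (i * k % 4 : ℕ) = j % 4) ∨
      (∃ k : Fin 4, (j * k % 4 : ℕ) = i % 4) := by decide
    rcases this i j with ⟨k, hk⟩ | ⟨k, hk⟩
    · exact h (Or.inr (pow_red hb _ _ _ hk))
    · exact h (Or.inl (pow_red hb _ _ _ hk))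
  · rw [mem_zp_iff (by norm_num) hb] at ha hc
    obtain ⟨i, rfl⟩ := ha
    obtain ⟨j, rfl⟩ := hc
    exfalso
    have : ∀ i j : Fin 5, (∃ k : Fin 5, (i * k % 5 : ℕ) = j % 5) ∨
      (∃ k : Fin 5, (j * k % 5 : ℕ) = i % 5) := by decide
    rcases this i j with ⟨k, hk⟩ | ⟨k, hk⟩
    · exact h (Or.inr (pow_red hb _ _ _ hk))
    · exact h (Or.inl (pow_red hb _ _ _ hk))
  · rw [mem_zp_iff (by norm_num) hb] at ha hc
    obtain ⟨i, rfl⟩ := ha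
    obtain ⟨j, rfl⟩ := hc
    have : ∀ i j : Fin 6, (∃ k : Fin 6, (i * k % 6 : ℕ) = j % 6) ∨
      (∃ k : Fin 6, (j * k % 6 : ℕ) = i % 6) ∨ (i = 3 ∧ (j = 2 ∨ j = 4)) ∨
        (j = 3 ∧ (i = 2 ∨ i = 4)) := by decide
    rcases this i j with ⟨k, hk⟩ | ⟨k, hk⟩ | hk
    · exact (h (Or.inr (pow_red hb _ _ _ hk))).elim
    · exact (h (Or.inl (pow_red hb _ _ _ hk))).elim
    · have p4 : b ^ 4 = b ^ 2 * b ^ 2 := by rw [← pow_add]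
      refine ⟨⟨hb, ?_, ?_⟩, ?_⟩
      · intro h3
        rcases hk with ⟨rfl, _⟩ | ⟨rfl, _⟩
        · exact one1 h3
        · exact one2 h3
      · intro h2
        rw [h2, one_mul] at p4
        rcases hk with ⟨_, rfl | rfl⟩ | ⟨_, rfl | rfl⟩
        · exact one2 h2
        · exact one2 p4
        · exact one1 h2
        · exact one1 p4
      · rcases hk with ⟨rfl, rfl | rfl⟩ | ⟨rfl, rfl | rfl⟩ <;> simp

theorem two_max {t b c x y : Equiv.Perm (Fin 5)} (hxb : x ∈ Subgroup.zpowers b)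
    (htb : t ∈ Subgroup.zpowers b) (htc : t ∈ Subgroup.zpowers c) (hyc : y ∈ Subgroup.zpowers c)
    (h1 : ¬ Cmp x t) (h2 : ¬ Cmp t y) (h3 : ¬ Cmp b c) : y = c ^ 3 ∧ t ≠ b ^ 3 := by
  obtain ⟨hb, h⟩ := maxl hxb htb h1
  obtain ⟨hc, h'⟩ := maxl htc hyc h2
  have key : t = b ^ 3 → t = c ^ 3 → False := by
    intro e1 e2
    rcases six5 b hb c hc (e1.symm.trans e2) with rfl | rfl
    · exact h3 (Or.inl (Subgroup.mem_zpowers _))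
    · exact h3 (Or.inl (Subgroup.npow_mem_zpowers _ _))
  have key2 : t = b ^ 3 → (t = c ^ 2 ∨ t = c ^ 4) → False := by
    intro e1 e2
    have t2 : t ^ 2 = 1 := by rw [e1, ← pow_mul]; exact hb.1
    have c6 := hc.1
    rcases e2 with e2 | e2
    · rw [e2, ← pow_mul] at t2
      apply hc.2.2
      calc c ^ 2 = c ^ 6 * (c ^ (2 * 2))⁻¹ := by group
        _ = 1 := by rw [t2, c6]; simp
    · rw [e2, ← pow_mul] at t2
      apply hc.2.2
      calc c ^ 2 = c ^ (4 * 2) * (c ^ 6)⁻¹ := by group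
        _ = 1 := by rw [t2, c6]; simp
  have key3 : t = c ^ 3 → (t = b ^ 2 ∨ t = b ^ 4) → False := by
    intro e1 e2
    have t2 : t ^ 2 = 1 := by rw [e1, ← pow_mul]; exact hc.1
    have c6 := hb.1
    rcases e2 with e2 | e2
    · rw [e2, ← pow_mul] at t2
      apply hb.2.2
      calc b ^ 2 = b ^ 6 * (b ^ (2 * 2))⁻¹ := by group
        _ = 1 := by rw [t2, c6]; simp
    · rw [e2, ← pow_mul] at t2
      apply hb.2.2
      calc b ^ 2 = b ^ (4 * 2) * (b ^ 6)⁻¹ := by group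
        _ = 1 := by rw [t2, c6]; simp
  tauto

theorem no_seq (w : ℕ → Equiv.Perm (Fin 5)) (h1 : ∀ i, Cmp (w i) (w (i + 1)))
    (h2 : ∀ i, ¬ Cmp (w i) (w (i + 2))) : False := by
  have up : ∀ i, w i ∈ Subgroup.zpowers (w (i + 1)) →
      w (i + 2) ∈ Subgroup.zpowers (w (i + 1)) := by
    intro i h
    rcases h1 (i + 1) with h' | h'
    · exact (h2 i (Or.inl (Subgroup.zpowers_le.2 h' h))).elim
    · exact h'
  have down : ∀ i, w (i + 1) ∈ Subgroup.zpowers (w i) →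
      w (i + 1) ∈ Subgroup.zpowers (w (i + 2)) := by
    intro i h
    rcases h1 (i + 1) with h' | h'
    · exact h'
    · exact (h2 i (Or.inr (Subgroup.zpowers_le.2 h h'))).elim
  obtain ⟨m, a⟩ : ∃ m, w m ∈ Subgroup.zpowers (w (m + 1)) := by
    rcases h1 0 with h | h
    · exact ⟨0, h⟩
    · exact ⟨1, down 0 h⟩
  have b := up _ a
  have c := down _ b
  have d := up _ c
  have e := down _ d
  have f := up _ e
  have r1 := two_max a b c d (h2 _) (h2 _) (h2 _)
  have r2 := two_max c d e f (h2 _) (h2 _) (h2 _)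
  exact r2.2 r1.1

open scoped Fin.CommRing in
theorem yes5 : IsChordal (powerGraph (Equiv.Perm (Fin 5))) := by
  intro n hn
  obtain ⟨m, rfl⟩ : ∃ m, n = m + 4 := ⟨n - 4, by omega⟩
  refine ⟨fun f => ?_⟩
  have v1 : ((1 : Fin (m + 4)) : ℕ) = 1 := by simp
  have v2 : ((2 : Fin (m + 4)) : ℕ) = 2 := by
    change 2 % (m + 4) = 2
    exact Nat.mod_eq_of_lt (by omega)
  have v3 : ((3 : Fin (m + 4)) : ℕ) = 3 := by
    change 3 % (m + 4) = 3
    exact Nat.mod_eq_of_lt (by omega)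
  have n20 : (2 : Fin (m + 4)) ≠ 0 := by
    intro h
    have h' := congrArg Fin.val h
    rw [v2] at h'
    simp at h'
  have n21 : (2 : Fin (m + 4)) ≠ 1 := by
    intro h
    have h' := congrArg Fin.val h
    rw [v2] at h'
    simp at h'
  have n30 : (3 : Fin (m + 4)) ≠ 0 := by
    intro h
    have h' := congrArg Fin.val h
    rw [v3] at h'
    simp at h'
  refine no_seq (fun i => f (i : Fin (m + 4))) ?_ ?_
  · intro i
    have : (SimpleGraph.cycleGraph (m + 4)).Adj (i : Fin (m + 4)) ((i + 1 : ℕ) : Fin (m + 4)) := by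
      rw [SimpleGraph.cycleGraph_adj]
      right
      push_cast
      ring
    exact ((pg_adj _ _).1 (f.map_rel_iff.2 this)).2
  · intro i h
    have hne : (i : Fin (m + 4)) ≠ ((i + 2 : ℕ) : Fin (m + 4)) := by
      intro h
      push_cast at h
      exact n20 (by simpa using h)
    have := f.map_rel_iff.1 ((pg_adj _ _).2 ⟨f.injective.ne hne, h⟩)
    rw [SimpleGraph.cycleGraph_adj] at this
    push_cast at this
    rcases this with h | h
    · apply n30
      have h' : (0 : Fin (m + 4)) = 1 + 2 := by rw [← h]; ring
      rw [h']; norm_num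
    · apply n21
      rw [← h]; ring

theorem stmt3 (n : ℕ) :
    IsChordal (powerGraph (Equiv.Perm (Fin n))) ↔ n ≤ 5 := by
  constructor
  · intro h
    by_contra hn
    exact not6 (chordal_mono (by omega) h)
  · intro h
    exact chordal_mono h yes5
end

section
/- The power graph of the alternating group Alt(n) (the group of even permutations of an n-element set) is chordal if and only if n ≤ 7. -/
open Equiv Equiv.Perm

def pgEmb {G H : Type*} [Group G] [Group H] (φ : G →* H) (hφ : Function.Injective φ) :
    powerGraph G ↪g powerGraph H where
  toFun := φ
  inj' := hφ
  map_rel_iff' := by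
    have key : ∀ x y : G, φ x ∈ Subgroup.zpowers (φ y) ↔ x ∈ Subgroup.zpowers y := by
      intro x y
      simp only [Subgroup.mem_zpowers_iff, ← map_zpow, hφ.eq_iff]
    intro a b
    simp [powerGraph, SimpleGraph.fromRel_adj, key, hφ.ne_iff, hφ.eq_iff]

theorem chordal_of_emb {V W : Type*} {Γ : SimpleGraph V} {Δ : SimpleGraph W} (e : Γ ↪g Δ)
    (h : IsChordal Δ) : IsChordal Γ := fun n hn => ⟨fun f => (h n hn).false (e.comp f)⟩

theorem exists_altHom {n m : ℕ} (h : n ≤ m) :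
    ∃ φ : alternatingGroup (Fin n) →* alternatingGroup (Fin m), Function.Injective φ := by
  classical
  let e : Fin n ≃ Set.range (Fin.castLE h) := Equiv.ofInjective _ (Fin.castLE_injective h)
  let ψ : Perm (Fin n) →* Perm (Fin m) := extendDomainHom (p := (· ∈ Set.range (Fin.castLE h))) e
  have hψ : Function.Injective ψ := extendDomainHom_injective _
  refine ⟨(ψ.comp (alternatingGroup (Fin n)).subtype).codRestrict _ ?_, ?_⟩
  · intro x
    rw [mem_alternatingGroup]
    have hx := mem_alternatingGroup.1 x.2
    exact (sign_extendDomain _ _).trans hx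
  · intro x y hxy
    have := congrArg Subtype.val hxy
    exact Subtype.ext (hψ this)

/-! Non-chordality of Alt(8). -/

def cA : Perm (Fin 8) := swap 0 1 * swap 1 2
def cA' : Perm (Fin 8) := swap 0 1 * swap 1 7
def cB : Perm (Fin 8) := swap 3 4 * swap 5 6
def cB' : Perm (Fin 8) := swap 3 5 * swap 4 6

def cyc8 : Fin 8 → Perm (Fin 8) :=
  ![cA, cA * cB, cB, cA' * cB, cA', cA' * cB', cB', cA * cB']

theorem mem_zpowers_six {G : Type*} [Group G] {x y : G} (hy : y ^ 6 = 1) :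
    x ∈ Subgroup.zpowers y ↔ ∃ k : Fin 6, y ^ (k : ℕ) = x := by
  constructor
  · rintro ⟨k, rfl⟩
    refine ⟨⟨(k % 6).toNat, by omega⟩, ?_⟩
    have h1 : (((k % 6).toNat : ℕ) : ℤ) = k % 6 := by omega
    have h2 : y ^ k = y ^ (k % 6 + 6 * (k / 6)) := by rw [Int.emod_add_mul_ediv]
    simp only
    rw [h2, zpow_add, zpow_mul, ← zpow_natCast, h1]
    have : y ^ (6 : ℤ) = 1 := by exact_mod_cast hy
    simp [this]
  · rintro ⟨k, rfl⟩
    exact Subgroup.npow_mem_zpowers _ _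

theorem cyc8_six : ∀ i, cyc8 i ^ 6 = 1 := by decide +kernel
theorem cyc8_sign : ∀ i, sign (cyc8 i) = 1 := by decide +kernel
theorem cyc8_inj : ∀ i j, cyc8 i = cyc8 j → i = j := by decide +kernel
theorem cyc8_adj : ∀ i j : Fin 8, (cyc8 i ≠ cyc8 j ∧ ((∃ k : Fin 6, cyc8 j ^ (k : ℕ) = cyc8 i) ∨
    (∃ k : Fin 6, cyc8 i ^ (k : ℕ) = cyc8 j))) ↔ (i - j = 1 ∨ j - i = 1) := by decide +kernel

theorem not_chordal_eight : ¬ IsChordal (powerGraph (alternatingGroup (Fin 8))) := by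
  intro h
  refine (h 8 (by norm_num)).false ?_
  refine ⟨⟨fun i => ⟨cyc8 i, mem_alternatingGroup.2 (cyc8_sign i)⟩, ?_⟩, ?_⟩
  · intro i j hij
    exact cyc8_inj i j (congrArg Subtype.val hij)
  · intro i j
    have h6 : ∀ i, (⟨cyc8 i, mem_alternatingGroup.2 (cyc8_sign i)⟩ : alternatingGroup (Fin 8)) ^ 6
      = 1 := fun i => Subtype.ext (cyc8_six i)
    rw [SimpleGraph.cycleGraph_adj, ← cyc8_adj]
    change (powerGraph (alternatingGroup (Fin 8))).Adj
      (⟨cyc8 i, mem_alternatingGroup.2 (cyc8_sign i)⟩ : alternatingGroup (Fin 8))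
      (⟨cyc8 j, mem_alternatingGroup.2 (cyc8_sign j)⟩ : alternatingGroup (Fin 8)) ↔ _
    simp only [powerGraph, SimpleGraph.fromRel_adj,
      mem_zpowers_six (h6 _), ne_eq, Subtype.ext_iff, Subgroup.coe_pow]

/-! Alt(7). -/

theorem arith7 : ∀ m : Fin 8, ∀ i j : Fin 8, i < m → j < m →
    (∃ k : Fin 8, (k * j : ℕ) % m = i) ∨ (∃ k : Fin 8, (k * i : ℕ) % m = j) ∨
    ((m : ℕ) = 6 ∧ (((i : ℕ) = 3 ∧ (j * 3 : ℕ) % 6 = 0) ∨ ((j : ℕ) = 3 ∧ (i * 3 : ℕ) % 6 = 0))) := by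
  decide +kernel

theorem order_six {G : Type*} [Group G] [Finite G] {x y z : G} (hy : orderOf y ≤ 7)
    (hx : x ∈ Subgroup.zpowers y) (hz : z ∈ Subgroup.zpowers y)
    (h1 : x ∉ Subgroup.zpowers z) (h2 : z ∉ Subgroup.zpowers x) :
    orderOf y = 6 ∧ ((x = y ^ 3 ∧ z ^ 3 = 1) ∨ (z = y ^ 3 ∧ x ^ 3 = 1)) := by
  classical
  rw [mem_zpowers_iff_mem_range_orderOf] at hx hz
  simp only [Finset.mem_image, Finset.mem_range] at hx hz
  obtain ⟨i, hi, rfl⟩ := hx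
  obtain ⟨j, hj, rfl⟩ := hz
  have := arith7 ⟨orderOf y, by omega⟩ ⟨i, by omega⟩ ⟨j, by omega⟩ hi hj
  rcases this with ⟨k, hk⟩ | ⟨k, hk⟩ | ⟨h6, h⟩
  · refine absurd ?_ h1
    simp only at hk
    rw [← hk, pow_mod_orderOf, mul_comm, pow_mul]
    exact Subgroup.npow_mem_zpowers _ _
  · refine absurd ?_ h2
    simp only at hk
    rw [← hk, pow_mod_orderOf, mul_comm, pow_mul]
    exact Subgroup.npow_mem_zpowers _ _
  · simp only at h6 h
    refine ⟨h6, ?_⟩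
    rcases h with ⟨h, h'⟩ | ⟨h, h'⟩
    · left
      refine ⟨by rw [h], ?_⟩
      rw [← pow_mul, ← orderOf_dvd_iff_pow_eq_one, h6]; omega
    · right
      refine ⟨by rw [h], ?_⟩
      rw [← pow_mul, ← orderOf_dvd_iff_pow_eq_one, h6]; omega

theorem multiset_enum (s : Multiset ℕ) (h2 : ∀ x ∈ s, 2 ≤ x) (hs : s.sum ≤ 7)
    (he : Even (s.sum + s.card)) : s.lcm ≤ 7 := by
  rcases s.empty_or_exists_mem with rfl | ⟨a, ha⟩
  · simp
  obtain ⟨s, rfl⟩ := Multiset.exists_cons_of_mem ha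
  have ha2 := h2 a (by simp)
  rcases s.empty_or_exists_mem with rfl | ⟨b, hb⟩
  · simp at *; omega
  obtain ⟨s, rfl⟩ := Multiset.exists_cons_of_mem hb
  have hb2 := h2 b (by simp)
  rcases s.empty_or_exists_mem with rfl | ⟨c, hc⟩
  · simp at *
    have : a ≤ 5 := by omega
    have : b ≤ 5 := by omega
    interval_cases a <;> interval_cases b <;> first | omega | (revert he; decide)
  obtain ⟨s, rfl⟩ := Multiset.exists_cons_of_mem hc
  have hc2 := h2 c (by simp)
  rcases s.empty_or_exists_mem with rfl | ⟨d, hd⟩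
  · simp at *
    have : a ≤ 3 := by omega
    have : b ≤ 3 := by omega
    have : c ≤ 3 := by omega
    interval_cases a <;> interval_cases b <;> interval_cases c <;>
      first | omega | (revert he; decide)
  have hd2 := h2 d (by simp [hd])
  obtain ⟨s, rfl⟩ := Multiset.exists_cons_of_mem hd
  simp at hs
  omega

theorem sign_even {σ : Perm (Fin 7)} (h : sign σ = 1) :
    Even (σ.cycleType.sum + σ.cycleType.card) := by
  rw [sign_of_cycleType] at h
  by_contra hc
  rw [Nat.not_even_iff_odd] at hc
  rw [hc.neg_one_pow] at h
  exact absurd h (by decide)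

theorem orderOf_le_seven (σ : Perm (Fin 7)) (h : sign σ = 1) : orderOf σ ≤ 7 := by
  rw [← lcm_cycleType]
  refine multiset_enum _ (fun x hx => two_le_of_mem_cycleType hx) ?_ (sign_even h)
  simpa using sum_cycleType_le σ

def b0 : Perm (Fin 7) := swap 0 1 * swap 2 3
def c0 : Perm (Fin 7) := swap 4 5 * swap 5 6

theorem conj_b0 (σ : Perm (Fin 7)) (h : sign σ = 1) (ho : orderOf σ = 2) :
    ∃ g : Perm (Fin 7), g * σ * g⁻¹ = b0 := by
  rw [← isConj_iff, isConj_iff_cycleType_eq]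
  have hb : b0.cycleType = Multiset.replicate 2 2 := by
    unfold b0
    decide +kernel
  obtain ⟨n, hn⟩ := cycleType_prime_order (σ := σ) (by rw [ho]; exact Nat.prime_two)
  have h1 := sum_cycleType_le σ
  have h2 := sign_even h
  rw [ho] at hn
  rw [hn] at h1 h2
  simp at h1 h2
  have : n = 1 := by
    have : n ≤ 2 := by omega
    interval_cases n
    · exact absurd h2 (by decide)
    · rfl
    · exact absurd h2 (by decide)
  rw [hn, hb, this]

theorem roots_dec : ∀ a c : Fin 7, ∀ (_ : b0 a ≠ a) (_ : b0 c ≠ c),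
   ∀ e : Fin 7, ∀ (_ : b0 e = e), ∀ f : Fin 7, ∀ (_ : b0 f = f), ∀ g : Fin 7, ∀ (_ : b0 g = g),
   let y : Fin 7 → Fin 7 := ![a, b0 a, c, b0 c, e, f, g]
   (∀ i, y (y (y i)) = b0 i) →
    ((∀ i, y i = b0 i) ∨ (∀ i, y i = (b0 * c0) i) ∨ (∀ i, y i = (b0 * c0 ^ 2) i)) := by
  decide +kernel

theorem cube_roots (y : Perm (Fin 7)) (h : y ^ 3 = b0) : y = b0 ∨ y = b0 * c0 ∨ y = b0 * c0 ^ 2 := by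
  have hc : ∀ i, y (b0 i) = b0 (y i) := by
    intro i
    have : y * b0 = b0 * y := by rw [← h]; exact (pow_succ' y 3).symm.trans (pow_succ y 3)
    exact DFunLike.congr_fun this i
  have h3 : ∀ i, y (y (y i)) = b0 i := fun i => by rw [← h]; rfl
  have e1 : b0 0 = 1 := by decide
  have e3 : b0 2 = 3 := by decide
  have hne : ∀ i, b0 i ≠ i → b0 (y i) ≠ y i := by
    intro i hi hh
    rw [← hc] at hh
    exact hi (y.injective hh)
  have heq : ∀ i, b0 i = i → b0 (y i) = y i := by
    intro i hi
    rw [← hc, hi]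
  have hy : (y : Fin 7 → Fin 7) = ![y 0, b0 (y 0), y 2, b0 (y 2), y 4, y 5, y 6] := by
    funext i
    rw [← hc, ← hc, e1, e3]
    fin_cases i <;> rfl
  have := roots_dec (y 0) (y 2) (hne _ (by decide)) (hne _ (by decide)) (y 4) (heq _ (by decide))
    (y 5) (heq _ (by decide)) (y 6) (heq _ (by decide))
  simp only [← hy] at this
  rcases this h3 with h | h | h
  · exact Or.inl (Equiv.ext h)
  · exact Or.inr (Or.inl (Equiv.ext h))
  · exact Or.inr (Or.inr (Equiv.ext h))

theorem roots_rel (y z : Perm (Fin 7)) (hy : y ^ 3 = b0) (hz : z ^ 3 = b0) (hy2 : y ^ 2 ≠ 1)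
    (hz2 : z ^ 2 ≠ 1) : z = y ∨ z = y ^ 5 := by
  have hb : b0 ^ 2 = 1 := by decide +kernel
  rcases cube_roots y hy with rfl | rfl | rfl
  · exact absurd hb hy2
  all_goals
    rcases cube_roots z hz with rfl | rfl | rfl
    · exact absurd hb hz2
    all_goals decide +kernel

theorem key7 (y z : alternatingGroup (Fin 7)) (hy : orderOf y = 6) (hz : orderOf z = 6)
    (h : y ^ 3 = z ^ 3) : z ∈ Subgroup.zpowers y := by
  have ho : orderOf (y ^ 3) = 2 := by rw [orderOf_pow, hy]; decide
  obtain ⟨g, hg⟩ := conj_b0 ((y ^ 3 : alternatingGroup (Fin 7)) : Perm (Fin 7))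
    (mem_alternatingGroup.1 (y ^ 3).2) (by rw [Subgroup.orderOf_coe, ho])
  have hg' := hg
  rw [h] at hg'
  rw [Subgroup.coe_pow, ← conj_pow] at hg hg'
  have ne : ∀ w : alternatingGroup (Fin 7), orderOf w = 6 → (g * (w : Perm (Fin 7)) * g⁻¹) ^ 2 ≠ 1 := by
    intro w hw hh
    rw [conj_pow, mul_inv_eq_one, mul_eq_left] at hh
    have : w ^ 2 = 1 := Subtype.ext hh
    rw [← orderOf_dvd_iff_pow_eq_one, hw] at this
    omega
  rcases roots_rel _ _ hg hg' (ne y hy) (ne z hz) with hh | hh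
  · have : z = y := Subtype.ext (by simpa using hh)
    rw [this]; exact Subgroup.mem_zpowers _
  · have : z = y ^ 5 := Subtype.ext (by rw [conj_pow] at hh; simpa using hh)
    rw [this]; exact Subgroup.npow_mem_zpowers _ _

open scoped Fin.CommRing in
theorem chordal_seven : IsChordal (powerGraph (alternatingGroup (Fin 7))) := by
  intro n hn
  refine ⟨fun f => ?_⟩
  obtain ⟨m, rfl⟩ : ∃ m, n = m + 4 := ⟨n - 4, by omega⟩
  let v : ℕ → alternatingGroup (Fin 7) := fun k => f (k : Fin (m + 4))
  have hadj : ∀ k, (powerGraph (alternatingGroup (Fin 7))).Adj (v k) (v (k + 1)) := by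
    intro k
    rw [f.map_adj_iff, SimpleGraph.cycleGraph_adj]
    right; push_cast; ring
  have hval : ∀ j : ℕ, j < m + 4 → j ≠ 0 → ((j : ℕ) : Fin (m + 4)) ≠ 0 := by
    intro j hj h0 h
    have := congrArg Fin.val h
    rw [Fin.val_natCast, Nat.mod_eq_of_lt hj] at this
    exact h0 this
  have hne2 : (2 : Fin (m + 4)) ≠ 0 := by exact_mod_cast hval 2 (by omega) (by omega)
  have hne1 : (1 : Fin (m + 4)) ≠ 0 := by exact_mod_cast hval 1 (by omega) (by omega)
  have hne3 : (3 : Fin (m + 4)) ≠ 0 := by exact_mod_cast hval 3 (by omega) (by omega)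
  have hnadj : ∀ k, ¬ (powerGraph (alternatingGroup (Fin 7))).Adj (v k) (v (k + 2)) := by
    intro k
    rw [f.map_adj_iff, SimpleGraph.cycleGraph_adj]
    push_cast
    rintro (h | h)
    · apply hne3
      linear_combination -h
    · apply hne1
      linear_combination h
  have hne : ∀ k, v k ≠ v (k + 2) := by
    intro k h
    have := f.injective h
    push_cast at this
    apply hne2
    linear_combination -this
  have hinc : ∀ k, v k ∉ Subgroup.zpowers (v (k + 2)) ∧ v (k + 2) ∉ Subgroup.zpowers (v k) := by
    intro k
    refine ⟨fun h => hnadj k ⟨hne k, Or.inl h⟩, fun h => hnadj k ⟨hne k, Or.inr h⟩⟩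
  have hcmp : ∀ k, v k ∈ Subgroup.zpowers (v (k + 1)) ∨ v (k + 1) ∈ Subgroup.zpowers (v k) :=
    fun k => (hadj k).2
  have tr : ∀ a b c : alternatingGroup (Fin 7), a ∈ Subgroup.zpowers b → b ∈ Subgroup.zpowers c →
      a ∈ Subgroup.zpowers c := fun a b c h1 h2 => Subgroup.zpowers_le.2 h2 h1
  have up : ∀ k, v k ∈ Subgroup.zpowers (v (k + 1)) → v (k + 2) ∈ Subgroup.zpowers (v (k + 1)) := by
    intro k h
    rcases hcmp (k + 1) with h' | h'
    · exact absurd (tr _ _ _ h h') (hinc k).1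
    · exact h'
  have down : ∀ k, v (k + 1) ∈ Subgroup.zpowers (v k) → v (k + 1) ∈ Subgroup.zpowers (v (k + 2)) := by
    intro k h
    rcases hcmp (k + 1) with h' | h'
    · exact h'
    · exact absurd (tr _ _ _ h' h) (hinc k).2
  have step : ∀ k, v k ∈ Subgroup.zpowers (v (k + 1)) →
      v (k + 2) ∈ Subgroup.zpowers (v (k + 3)) := fun k h => down (k + 1) (up k h)
  have six : ∀ k, v k ∈ Subgroup.zpowers (v (k + 1)) → orderOf (v (k + 1)) = 6 ∧
      ((v k = v (k + 1) ^ 3 ∧ v (k + 2) ^ 3 = 1) ∨ (v (k + 2) = v (k + 1) ^ 3 ∧ v k ^ 3 = 1)) := by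
    intro k h
    refine order_six ?_ h (up k h) (hinc k).1 (hinc k).2
    rw [← Subgroup.orderOf_coe]
    exact orderOf_le_seven _ (mem_alternatingGroup.1 (v (k + 1)).2)
  have nine : ∀ x y : alternatingGroup (Fin 7), orderOf y = 6 → x = y ^ 3 → x ^ 3 ≠ 1 := by
    rintro x y hy rfl h
    rw [← pow_mul, ← orderOf_dvd_iff_pow_eq_one, hy] at h
    omega
  have fin : ∀ k, v k ∈ Subgroup.zpowers (v (k + 1)) → v (k + 2) = v (k + 1) ^ 3 → False := by
    intro k h h3
    obtain ⟨o1, -⟩ := six k h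
    obtain ⟨o2, h2⟩ := six (k + 2) (step k h)
    have := nine _ _ o1 h3
    rcases h2 with ⟨h2, -⟩ | ⟨-, h2⟩
    · exact (hinc (k + 1)).2 (key7 _ _ o1 o2 (h3.symm.trans h2))
    · exact this h2
  obtain ⟨k, hk⟩ : ∃ k, v k ∈ Subgroup.zpowers (v (k + 1)) := by
    rcases hcmp 0 with h | h
    · exact ⟨0, h⟩
    · exact ⟨1, down 0 h⟩
  obtain ⟨-, h | h⟩ := six k hk
  · obtain ⟨o2, h2 | h2⟩ := six (k + 2) (step k hk)
    · exact nine _ _ o2 h2.1 h.2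
    · exact fin (k + 2) (step k hk) h2.1
  · exact fin k hk h.1

theorem stmt4 (n : ℕ) :
    IsChordal (powerGraph (alternatingGroup (Fin n))) ↔ n ≤ 7 := by
  constructor
  · intro h
    by_contra hn
    obtain ⟨φ, hφ⟩ := exists_altHom (n := 8) (m := n) (by omega)
    exact not_chordal_eight (chordal_of_emb (pgEmb φ hφ) h)
  · intro hn
    obtain ⟨φ, hφ⟩ := exists_altHom hn
    exact chordal_of_emb (pgEmb φ hφ) chordal_seven
end

section
/- Let F be a finite field with q elements and let PSL₂(q) denote the quotient of the special linear group SL₂(F) by its center. If the power graph of PSL₂(q) is chordal, then each of the two numbers (q−1)/gcd(q−1, 2) and (q+1)/gcd(q+1, 2) has at most two distinct prime divisors and at most one prime divisor p with p² dividing it (i.e., if p² and p'² both divide the number for primes p, p', then p = p'). -/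
/-- The projective special linear group `PSL_n(F)`: the quotient of `SL_n(F)` by its center. -/
abbrev PSL (n : ℕ) (F : Type*) [Field F] :=
  Matrix.SpecialLinearGroup (Fin n) F ⧸ Subgroup.center (Matrix.SpecialLinearGroup (Fin n) F)

/-- `m` has at most two distinct prime divisors and at most one prime divisor with
multiplicity greater than one. -/
def GoodNumber (m : ℕ) : Prop :=
  m.primeFactors.card ≤ 2 ∧
    ∀ p p' : ℕ, p.Prime → p'.Prime → p ^ 2 ∣ m → p' ^ 2 ∣ m → p = p'

lemma pg_key {G : Type*} [Group G] (g : G) (hg : 0 < orderOf g) (d e : ℕ)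
    (hd : d ∣ orderOf g) (he : e ∣ orderOf g) :
    g ^ (orderOf g / d) ∈ Subgroup.zpowers (g ^ (orderOf g / e)) ↔ d ∣ e := by
  have ho : ∀ c, c ∣ orderOf g → orderOf (g ^ (orderOf g / c)) = c := by
    intro c hc
    obtain ⟨k, hk⟩ := hc
    have hc0 : 0 < c := Nat.pos_of_ne_zero (by rintro rfl; rw [hk] at hg; simp at hg)
    have hk0 : k ≠ 0 := by rintro rfl; rw [hk] at hg; simp at hg
    have h1 : orderOf g / c = k := by rw [hk]; exact Nat.mul_div_cancel_left _ hc0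
    rw [h1, orderOf_pow_of_dvd hk0 (hk ▸ dvd_mul_left _ _), hk]
    exact Nat.mul_div_cancel _ (Nat.pos_of_ne_zero hk0)
  constructor
  · intro h
    have := orderOf_dvd_of_mem_zpowers h
    rwa [ho d hd, ho e he] at this
  · rintro ⟨k, rfl⟩
    obtain ⟨l, hl⟩ := he
    have hdk : 0 < d * k := Nat.pos_of_ne_zero (by intro h; rw [h, zero_mul] at hl; omega)
    have hd0 : 0 < d := Nat.pos_of_mul_pos_right hdk
    have h1 : orderOf g / d = l * k := by
      rw [hl, show d * k * l = d * (l * k) by ring]; exact Nat.mul_div_cancel_left _ hd0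
    have h2 : orderOf g / (d * k) = l := by
      rw [hl]; exact Nat.mul_div_cancel_left _ hdk
    rw [h1, h2, pow_mul]
    exact Subgroup.npow_mem_zpowers _ _

lemma pg_cycle {G : Type*} [Group G] (hG : IsChordal (powerGraph G)) (g : G)
    (hg : 0 < orderOf g) (n : ℕ) (hn : 4 ≤ n) (c : Fin n → ℕ)
    (hc : ∀ i, c i ∣ orderOf g)
    (h : ∀ i j, i ≠ j → ¬ (c i ∣ c j ∧ c j ∣ c i) ∧
      ((c i ∣ c j ∨ c j ∣ c i) ↔ (SimpleGraph.cycleGraph n).Adj i j)) : False := by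
  have inj : Function.Injective (fun i => g ^ (orderOf g / c i)) := by
    intro i j hij
    by_contra hne
    apply (h i j hne).1
    simp only at hij
    constructor
    · rw [← pg_key g hg _ _ (hc i) (hc j), hij]; exact Subgroup.mem_zpowers _
    · rw [← pg_key g hg _ _ (hc j) (hc i), hij]; exact Subgroup.mem_zpowers _
  refine (hG n hn).false ⟨⟨_, inj⟩, ?_⟩
  intro i j
  by_cases hij : i = j
  · subst hij; simp
  · rw [← (h i j hij).2]
    simp only [powerGraph, SimpleGraph.fromRel_adj, Function.Embedding.coeFn_mk]
    rw [pg_key g hg _ _ (hc i) (hc j), pg_key g hg _ _ (hc j) (hc i)]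
    exact ⟨fun h => h.2, fun h => ⟨fun he => hij (inj he), h⟩⟩

lemma prime_dvd_mul3 {p a b : ℕ} (hp : p.Prime) (ha : a.Prime) (hb : b.Prime) :
    p ∣ a * b ↔ p = a ∨ p = b := by
  rw [hp.dvd_mul, Nat.prime_dvd_prime_iff_eq hp ha, Nat.prime_dvd_prime_iff_eq hp hb]

lemma good_of_dvd {G : Type*} [Group G] (hG : IsChordal (powerGraph G)) (g : G)
    (hg : 0 < orderOf g) (m : ℕ) (hm : m ∣ orderOf g) : GoodNumber m := by
  constructor
  · by_contra hcard
    obtain ⟨a, b, c, ha, hb, hc, hab, hac, hbc⟩ :=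
      Finset.two_lt_card_iff.1 (not_le.1 hcard)
    have ham := (Nat.dvd_of_mem_primeFactors ha).trans hm
    have hbm := (Nat.dvd_of_mem_primeFactors hb).trans hm
    have hcm := (Nat.dvd_of_mem_primeFactors hc).trans hm
    replace ha := Nat.prime_of_mem_primeFactors ha
    replace hb := Nat.prime_of_mem_primeFactors hb
    replace hc := Nat.prime_of_mem_primeFactors hc
    have cop := fun {x y : ℕ} (hx : x.Prime) (hy : y.Prime) (h : x ≠ y) =>
      (Nat.coprime_primes hx hy).2 h
    have h1 := (cop ha hb hab).mul_dvd_of_dvd_of_dvd ham hbm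
    have h2 := (cop hb hc hbc).mul_dvd_of_dvd_of_dvd hbm hcm
    have h3 := (cop hc ha hac.symm).mul_dvd_of_dvd_of_dvd hcm ham
    have np : ∀ x y z : ℕ, x.Prime → y.Prime → z.Prime → ¬ (x * y ∣ z) := by
      intro x y z hx hy hz h
      have e1 := (Nat.prime_dvd_prime_iff_eq hx hz).1 ((dvd_mul_right x y).trans h)
      subst e1
      have := Nat.le_of_dvd hx.pos h
      nlinarith [hx.two_le, hy.two_le]
    have dd : ∀ x y z w : ℕ, x.Prime → y.Prime → z.Prime → w.Prime → x * y ∣ z * w →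
        (x = z ∨ x = w) ∧ (y = z ∨ y = w) := fun x y z w hx hy hz hw h =>
      ⟨(prime_dvd_mul3 hx hz hw).1 ((dvd_mul_right x y).trans h),
       (prime_dvd_mul3 hy hz hw).1 ((dvd_mul_left y x).trans h)⟩
    have n1 : ¬ (a * b ∣ b * c) := fun h => by have := dd _ _ _ _ ha hb hb hc h; tauto
    have n2 : ¬ (a * b ∣ c * a) := fun h => by
      have := dd _ _ _ _ ha hb hc ha h; have := hab.symm; tauto
    have n3 : ¬ (b * c ∣ a * b) := fun h => by
      have := dd _ _ _ _ hb hc ha hb h; have := hac.symm; have := hbc.symm; tauto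
    have n4 : ¬ (b * c ∣ c * a) := fun h => by
      have := dd _ _ _ _ hb hc hc ha h; have := hab.symm; tauto
    have n5 : ¬ (c * a ∣ a * b) := fun h => by
      have := dd _ _ _ _ hc ha ha hb h; have := hac.symm; have := hbc.symm; tauto
    have n6 : ¬ (c * a ∣ b * c) := fun h => by
      have := dd _ _ _ _ hc ha hb hc h; tauto
    refine pg_cycle hG g hg 6 (by norm_num) ![a, a * b, b, b * c, c, c * a] ?_ ?_
    · intro i; fin_cases i <;> simp <;> assumption
    · intro i j hij
      rw [SimpleGraph.cycleGraph_adj']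
      fin_cases i <;> fin_cases j <;>
      first
      | exact absurd rfl hij
      | (simp [prime_dvd_mul3, Nat.prime_dvd_prime_iff_eq, ha, hb, hc, hab, hac, hbc, hab.symm,
          hac.symm, hbc.symm, np, n1, n2, n3, n4, n5, n6] <;> decide)
  · intro p r hp hr hpm hrm
    by_contra hne
    have cop := (Nat.coprime_primes hp hr).2 hne
    have hpr : ¬ p ∣ r := fun h => hne ((Nat.prime_dvd_prime_iff_eq hp hr).1 h)
    have hrp : ¬ r ∣ p := fun h => hne ((Nat.prime_dvd_prime_iff_eq hr hp).1 h).symm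
    have hbig := ((cop.pow 2 2).mul_dvd_of_dvd_of_dvd hpm hrm).trans hm
    have e1 : ¬ (p ^ 2 * r ∣ p * r ^ 2) := by
      rw [show p ^ 2 * r = (p * r) * p by ring, show p * r ^ 2 = (p * r) * r by ring,
        Nat.mul_dvd_mul_iff_left (Nat.mul_pos hp.pos hr.pos)]
      exact hpr
    have e2 : ¬ (p * r ^ 2 ∣ p ^ 2 * r) := by
      rw [show p ^ 2 * r = (p * r) * p by ring, show p * r ^ 2 = (p * r) * r by ring,
        Nat.mul_dvd_mul_iff_left (Nat.mul_pos hp.pos hr.pos)]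
      exact hrp
    have f1 : ¬ (p ^ 2 * r ∣ p) := fun h => hrp ((dvd_mul_left _ _).trans h)
    have f2 : ¬ (p ^ 2 * r ∣ r) := fun h =>
      hpr (((dvd_pow_self p two_ne_zero).mul_right _).trans h)
    have f3 : ¬ (p * r ^ 2 ∣ r) := fun h => hpr ((dvd_mul_right _ _).trans h)
    have f4 : ¬ (p * r ^ 2 ∣ p) := fun h =>
      hrp (((dvd_pow_self r two_ne_zero).mul_left _).trans h)
    have g1 : p ∣ p ^ 2 * r := (dvd_pow_self p two_ne_zero).mul_right _
    have g2 : r ∣ p * r ^ 2 := (dvd_pow_self r two_ne_zero).mul_left _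
    refine pg_cycle hG g hg 4 (by norm_num) ![p, p ^ 2 * r, r, p * r ^ 2] ?_ ?_
    · have k1 : p ^ 2 * r ∣ p ^ 2 * r ^ 2 := mul_dvd_mul_left _ (dvd_pow_self r two_ne_zero)
      have k2 : p * r ^ 2 ∣ p ^ 2 * r ^ 2 := mul_dvd_mul_right (dvd_pow_self p two_ne_zero) _
      intro i; fin_cases i
      · exact (g1.trans k1).trans hbig
      · exact k1.trans hbig
      · exact (g2.trans k2).trans hbig
      · exact k2.trans hbig
    · intro i j hij
      rw [SimpleGraph.cycleGraph_adj']
      fin_cases i <;> fin_cases j <;>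
      first
      | exact absurd rfl hij
      | (simp [hpr, hrp, e1, e2, f1, f2, f3, f4, g1, g2] <;> decide)

lemma div_gcd_dvd {a b n : ℕ} (ha : 0 < a) (h : a ∣ n * b) : a / Nat.gcd a b ∣ n := by
  have hg : 0 < Nat.gcd a b := Nat.gcd_pos_of_pos_left _ ha
  have h1 : a / a.gcd b ∣ n * (b / a.gcd b) := by
    rw [← Nat.mul_div_assoc _ (Nat.gcd_dvd_right a b)]
    exact Nat.div_dvd_div (Nat.gcd_dvd_left a b) h
  exact (Nat.coprime_div_gcd_div_gcd hg).dvd_of_dvd_mul_right h1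

lemma psl_good {F : Type*} [Field F] [Fintype F]
    (hG : IsChordal (powerGraph (PSL 2 F))) (A : Matrix.SpecialLinearGroup (Fin 2) F) (m : ℕ)
    (h : ∀ n : ℕ, ∀ r : F, (A : Matrix (Fin 2) (Fin 2) F) ^ n = Matrix.scalar (Fin 2) r → m ∣ n) :
    GoodNumber m := by
  have : Finite (Matrix.SpecialLinearGroup (Fin 2) F) := Subtype.finite
  refine good_of_dvd hG (QuotientGroup.mk A : PSL 2 F) (orderOf_pos _) m ?_
  have h1 := pow_orderOf_eq_one (QuotientGroup.mk A : PSL 2 F)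
  rw [← QuotientGroup.mk_pow, QuotientGroup.eq_one_iff,
    Matrix.SpecialLinearGroup.mem_center_iff] at h1
  obtain ⟨r, -, hr⟩ := h1
  refine h _ r ?_
  rw [hr]; simp

lemma split_case {F : Type*} [Field F] [Fintype F]
    (hG : IsChordal (powerGraph (PSL 2 F))) :
    GoodNumber ((Fintype.card F - 1) / Nat.gcd (Fintype.card F - 1) 2) := by
  classical
  obtain ⟨a, ha⟩ := IsCyclic.exists_generator (α := Fˣ)
  have hord : orderOf a = Fintype.card F - 1 := by
    rw [orderOf_eq_card_of_forall_mem_zpowers ha, Nat.card_eq_fintype_card, Fintype.card_units]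
  refine psl_good hG ⟨Matrix.diagonal ![(a : F), ((a⁻¹ : Fˣ) : F)], by simp⟩ _ ?_
  intro n r h
  simp only [Matrix.diagonal_pow, Matrix.scalar_apply] at h
  have h0 := congrFun (congrFun h 0) 0
  have h1 := congrFun (congrFun h 1) 1
  simp at h0 h1
  have h2 : a ^ (n * 2) = 1 := by
    apply Units.ext
    push_cast
    rw [mul_two, pow_add]
    nth_rw 1 [h0]
    rw [← h1]
    simp
  refine div_gcd_dvd ?_ ?_
  · have := Fintype.one_lt_card (α := F); omega
  · rw [← hord]; exact orderOf_dvd_of_pow_eq_one h2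

lemma nonsplit_case {F : Type*} [Field F] [Fintype F]
    (hG : IsChordal (powerGraph (PSL 2 F))) :
    GoodNumber ((Fintype.card F + 1) / Nat.gcd (Fintype.card F + 1) 2) := by
  classical
  obtain ⟨p, hp, k, hpp, hcard⟩ := FiniteField.card' F
  haveI := Fact.mk hpp
  let K := FiniteField.Extension F p 2
  have : Fintype K := Fintype.ofFinite K
  obtain ⟨b, hb⟩ := IsCyclic.exists_generator (α := Kˣ)
  set q := Fintype.card F with hq
  have hq1 : 1 < q := Fintype.one_lt_card
  have hKc : Nat.card K = q ^ 2 := by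
    rw [FiniteField.natCard_extension, Nat.card_eq_fintype_card]
  have hord : orderOf b = (q - 1) * (q + 1) := by
    rw [orderOf_eq_card_of_forall_mem_zpowers hb, Nat.card_eq_fintype_card, Fintype.card_units,
      ← Nat.card_eq_fintype_card, hKc]
    obtain ⟨t, ht⟩ : ∃ t, q = t + 1 := ⟨q - 1, by omega⟩
    rw [ht, Nat.sub_eq_iff_eq_add (by nlinarith)]
    simp; ring
  have hfr : Module.finrank F K = 2 := FiniteField.finrank_extension F p 2
  let B := Module.finBasisOfFinrankEq F K hfr
  let β : K := ((b ^ (q - 1) : Kˣ) : K)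
  have hβ : β ^ (q + 1) = 1 := by
    simp only [β]
    rw [← Units.val_pow_eq_pow_val, ← pow_mul, ← hord, pow_orderOf_eq_one, Units.val_one]
  have hnorm : Algebra.norm F β = 1 := by
    apply (algebraMap F K).injective
    rw [FiniteField.algebraMap_norm_eq_pow, map_one, ← hβ]
    congr 1
    rw [hKc, Nat.card_eq_fintype_card, ← hq]
    refine Nat.div_eq_of_eq_mul_right (by omega) ?_
    obtain ⟨t, ht⟩ : ∃ t, q = t + 1 := ⟨q - 1, by omega⟩
    rw [ht, Nat.sub_eq_iff_eq_add (by nlinarith)]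
    simp; ring
  refine psl_good hG ⟨Algebra.leftMulMatrix B β, by
    rw [← Algebra.norm_eq_matrix_det, hnorm]⟩ _ ?_
  intro n r h
  have h1 : β ^ n = algebraMap F K r := by
    apply Algebra.leftMulMatrix_injective B
    rw [map_pow, AlgHom.commutes]
    exact h
  have h2 : (β ^ n) ^ q = β ^ n := by
    rw [h1, ← map_pow, FiniteField.pow_card]
  have h3 : b ^ ((q - 1) * (n * (q - 1))) = 1 := by
    have h4 : (((b ^ (q - 1)) ^ n) ^ q) = (b ^ (q - 1)) ^ n := by
      apply Units.ext
      push_cast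
      simpa [β] using h2
    have h5 : ((b ^ (q - 1)) ^ n) ^ (q - 1) * (b ^ (q - 1)) ^ n = 1 * (b ^ (q - 1)) ^ n := by
      rw [← pow_succ, Nat.sub_add_cancel hq1.le, h4, one_mul]
    rw [pow_mul, pow_mul]
    exact mul_right_cancel h5
  have h6 := orderOf_dvd_of_pow_eq_one h3
  rw [hord, Nat.mul_dvd_mul_iff_left (by omega)] at h6
  refine div_gcd_dvd (by omega) ?_
  have : n * 2 = n * (q + 1) - n * (q - 1) := by
    rw [← Nat.mul_sub]; congr 1; omega
  rw [this]
  exact Nat.dvd_sub (dvd_mul_left _ _) h6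

theorem stmt5 (F : Type*) [Field F] [Fintype F] (q : ℕ) (hq : Fintype.card F = q)
    (hchordal : IsChordal (powerGraph (PSL 2 F))) :
    GoodNumber ((q - 1) / Nat.gcd (q - 1) 2) ∧ GoodNumber ((q + 1) / Nat.gcd (q + 1) 2) := by
  subst hq
  exact ⟨split_case hchordal, nonsplit_case hchordal⟩
end
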